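/- arXiv:1605.03046 — 5 statements merged into one kernel-verified Lean document; each statement's English description precedes it below -/
import Mathlib

section
/- Fix positive reals p₋₁, p₀, p₁, let P(u) = p₋₁u⁻¹ + p₀ + p₁u, τ = √(p₋₁/p₁), ρ = 1/P(τ) = 1/(p₀ + 2√(p₋₁p₁)), and C = √(2P(τ)/P″(τ)) where P″(τ) = 2p₋₁/τ³. For 0 < z < ρ the discriminant (1−p₀z)² − 4p₋₁p₁z² is positive; define the small branch u₁(z) = (1 − p₀z − √((1−p₀z)² − 4p₋₁p₁z²))/(2p₁z). Then u₁(z) = τ − C√(1 − z/ρ) + O(1 − z/ρ) as z → ρ⁻; explicitly, there exist M > 0 and η > 0 such that for all real z with ρ − η < z < ρ one has |u₁(z) − τ + C·√(1 − z/ρ)| ≤ M(1 − z/ρ). -/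
/-!
The point `τ = √(p₋₁/p₁)` is the minimum of `P` on the positive axis, and
`P(u) - P(τ) = p₁(u - τ)²/u`. Hence a solution `u` of `zP(u) = 1` satisfies
`(u - τ)² = (1 - z/ρ) u/(p₁z)`, where `ρ = 1/P(τ)`. As `z → ρ` the last factor tends to
`τ/(p₁ρ) = C²`, so `τ - u ~ C√(1 - z/ρ)` on the branch below `τ`. Feeding this back into the factor
`u/(p₁z)` shows that its distance to the limit is `O(√(1 - z/ρ))`, which gives the error term
`O(1 - z/ρ)`.
-/

/-- The step polynomial `P(u) = p₋₁u⁻¹ + p₀ + p₁u` of weighted Motzkin paths; `pm` is `p₋₁`. -/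
noncomputable def stepPolynomial (pm p0 p1 u : ℝ) : ℝ :=
  pm * u⁻¹ + p0 + p1 * u

/-- The point `τ` at which the step polynomial has its minimum on the positive axis. -/
noncomputable def saddlePoint (pm p1 : ℝ) : ℝ :=
  √(pm / p1)

/-- The dominant singularity `ρ = 1/P(τ)` of the small branch, with `P(τ)` in closed form. -/
noncomputable def dominantSingularity (pm p0 p1 : ℝ) : ℝ :=
  1 / (p0 + 2 * √(pm * p1))

/-- The coefficient `C = √(2P(τ)/P″(τ))` of the square-root singularity. -/
noncomputable def singularCoeff (pm p0 p1 : ℝ) : ℝ :=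
  √(2 * stepPolynomial pm p0 p1 (saddlePoint pm p1) / (2 * pm / saddlePoint pm p1 ^ 3))

/-- The discriminant of the kernel equation `zP(u) = 1`, cleared of denominators to the quadratic
`p₁z u² - (1 - p₀z) u + p₋₁z = 0`. -/
def kernelDiscrim (pm p0 p1 z : ℝ) : ℝ :=
  (1 - p0 * z) ^ 2 - 4 * pm * p1 * z ^ 2

/-- The root `u₁(z)` of the kernel equation that tends to `0` with `z`. -/
noncomputable def smallBranch (pm p0 p1 z : ℝ) : ℝ :=
  (1 - p0 * z - √(kernelDiscrim pm p0 p1 z)) / (2 * p1 * z)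

theorem abs_sub_le_abs_sq_sub_sq_div {x y : ℝ} (hx : 0 ≤ x) (hy : 0 < y) :
    |x - y| ≤ |x ^ 2 - y ^ 2| / y := by
  rw [le_div_iff₀ hy, sq_sub_sq, abs_mul, abs_of_pos (by positivity : 0 < x + y), mul_comm]
  gcongr
  exact le_add_of_nonneg_left hx

theorem one_sub_div_pos {z r : ℝ} (hz : 0 < z) (hzr : z < r) : 0 < 1 - z / r :=
  sub_pos.2 ((div_lt_one (hz.trans hzr)).2 hzr)

section SaddlePoint

variable {pm p0 p1 : ℝ}

theorem saddlePoint_pos (hpm : 0 < pm) (hp1 : 0 < p1) : 0 < saddlePoint pm p1 :=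
  Real.sqrt_pos.2 (div_pos hpm hp1)

theorem mul_saddlePoint_sq (hpm : 0 ≤ pm) (hp1 : 0 < p1) : p1 * saddlePoint pm p1 ^ 2 = pm := by
  rw [saddlePoint, Real.sq_sqrt (by positivity), mul_div_cancel₀ pm hp1.ne']

theorem sqrt_mul_eq_mul_saddlePoint (hp1 : 0 < p1) : √(pm * p1) = p1 * saddlePoint pm p1 := by
  have hsq : pm * p1 = p1 ^ 2 * (pm / p1) := by field_simp
  rw [hsq, Real.sqrt_mul (sq_nonneg p1), Real.sqrt_sq hp1.le, saddlePoint]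

theorem div_dominantSingularity (hp1 : 0 < p1) (z : ℝ) :
    z / dominantSingularity pm p0 p1 = z * (p0 + 2 * p1 * saddlePoint pm p1) := by
  rw [dominantSingularity, div_div_eq_mul_div, div_one, sqrt_mul_eq_mul_saddlePoint hp1, mul_assoc]

theorem stepPolynomial_saddlePoint (hpm : 0 < pm) (hp1 : 0 < p1) :
    stepPolynomial pm p0 p1 (saddlePoint pm p1) = 1 / dominantSingularity pm p0 p1 := by
  have hτ := saddlePoint_pos hpm hp1
  have hτ_sq := mul_saddlePoint_sq hpm.le hp1
  rw [div_dominantSingularity hp1, stepPolynomial]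
  field_simp
  linear_combination -hτ_sq

theorem stepPolynomial_sub_saddlePoint (hpm : 0 < pm) (hp1 : 0 < p1) {u : ℝ} (hu : u ≠ 0) :
    stepPolynomial pm p0 p1 u - stepPolynomial pm p0 p1 (saddlePoint pm p1) =
      p1 * (u - saddlePoint pm p1) ^ 2 / u := by
  have hτ_sq := mul_saddlePoint_sq hpm.le hp1
  rw [stepPolynomial_saddlePoint hpm hp1, div_dominantSingularity hp1, stepPolynomial]
  field_simp
  linear_combination -hτ_sq

theorem singularCoeff_eq_sqrt (hpm : 0 < pm) (hp1 : 0 < p1) :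
    singularCoeff pm p0 p1 = √(saddlePoint pm p1 / (p1 * dominantSingularity pm p0 p1)) := by
  have hτ := saddlePoint_pos hpm hp1
  have hτ_sq := mul_saddlePoint_sq hpm.le hp1
  rw [singularCoeff, stepPolynomial_saddlePoint hpm hp1]
  congr 1
  field_simp
  linear_combination (dominantSingularity pm p0 p1)⁻¹ * hτ_sq

theorem singularCoeff_pos (hpm : 0 < pm) (hp1 : 0 < p1)
    (hρ : 0 < dominantSingularity pm p0 p1) : 0 < singularCoeff pm p0 p1 := by
  rw [singularCoeff_eq_sqrt hpm hp1, Real.sqrt_pos]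
  exact div_pos (saddlePoint_pos hpm hp1) (mul_pos hp1 hρ)

theorem singularCoeff_sq (hpm : 0 < pm) (hp1 : 0 < p1) (hρ : 0 ≤ dominantSingularity pm p0 p1) :
    singularCoeff pm p0 p1 ^ 2 = saddlePoint pm p1 / (p1 * dominantSingularity pm p0 p1) := by
  have hτ := saddlePoint_pos hpm hp1
  rw [singularCoeff_eq_sqrt hpm hp1, Real.sq_sqrt (by positivity)]

end SaddlePoint

section SmallBranch

variable {pm p0 p1 z : ℝ}

theorem kernelDiscrim_eq_mul (hpm : 0 ≤ pm) (hp1 : 0 < p1) :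
    kernelDiscrim pm p0 p1 z =
      (1 - z / dominantSingularity pm p0 p1) *
        (1 - z / dominantSingularity pm p0 p1 + 4 * p1 * saddlePoint pm p1 * z) := by
  rw [kernelDiscrim, div_dominantSingularity hp1]
  linear_combination 4 * p1 * z ^ 2 * mul_saddlePoint_sq hpm hp1

theorem kernelDiscrim_pos (hpm : 0 < pm) (hp1 : 0 < p1) (hz : 0 < z)
    (hzρ : z < dominantSingularity pm p0 p1) : 0 < kernelDiscrim pm p0 p1 z := by
  have hτ := saddlePoint_pos hpm hp1
  have hw := one_sub_div_pos hz hzρ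
  rw [kernelDiscrim_eq_mul hpm.le hp1]
  exact mul_pos hw (by positivity)

theorem smallBranch_pos (hpm : 0 < pm) (hp1 : 0 < p1) (hz : 0 < z)
    (hzρ : z < dominantSingularity pm p0 p1) : 0 < smallBranch pm p0 p1 z := by
  have hlin : 0 < 1 - p0 * z := by
    have hτ := saddlePoint_pos hpm hp1
    have hw := one_sub_div_pos hz hzρ
    rw [div_dominantSingularity hp1] at hw
    have : 0 < 2 * p1 * saddlePoint pm p1 * z := by positivity
    linarith
  have hsqrt : √(kernelDiscrim pm p0 p1 z) < 1 - p0 * z := by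
    rw [Real.sqrt_lt' hlin, kernelDiscrim]
    exact sub_lt_self _ (by positivity)
  exact div_pos (sub_pos.2 hsqrt) (by positivity)

theorem smallBranch_le_saddlePoint (hpm : 0 < pm) (hp1 : 0 < p1) (hz : 0 < z)
    (hzρ : z < dominantSingularity pm p0 p1) :
    smallBranch pm p0 p1 z ≤ saddlePoint pm p1 := by
  have hτ := saddlePoint_pos hpm hp1
  have hw := (one_sub_div_pos hz hzρ).le
  have hsqrt : 1 - z / dominantSingularity pm p0 p1 ≤ √(kernelDiscrim pm p0 p1 z) := by
    rw [kernelDiscrim_eq_mul hpm.le hp1]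
    apply Real.le_sqrt_of_sq_le
    rw [sq]
    exact mul_le_mul_of_nonneg_left (le_add_of_nonneg_right (by positivity)) hw
  rw [div_dominantSingularity hp1] at hsqrt
  rw [smallBranch, div_le_iff₀ (by positivity)]
  linarith

theorem mul_stepPolynomial_smallBranch (hpm : 0 < pm) (hp1 : 0 < p1) (hz : 0 < z)
    (hzρ : z < dominantSingularity pm p0 p1) :
    z * stepPolynomial pm p0 p1 (smallBranch pm p0 p1 z) = 1 := by
  have hu := smallBranch_pos hpm hp1 hz hzρ
  have hD := kernelDiscrim_pos hpm hp1 hz hzρ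
  have hdiscrim : discrim (p1 * z) (-(1 - p0 * z)) (pm * z) =
      √(kernelDiscrim pm p0 p1 z) * √(kernelDiscrim pm p0 p1 z) := by
    rw [Real.mul_self_sqrt hD.le, discrim, kernelDiscrim]
    ring
  have hquad := (quadratic_eq_zero_iff (by positivity) hdiscrim (smallBranch pm p0 p1 z)).2
    (Or.inr (by rw [smallBranch, neg_neg, mul_assoc]))
  rw [stepPolynomial]
  field_simp
  linear_combination hquad

end SmallBranch

section KernelEquation

variable {pm p0 p1 z u : ℝ}

theorem saddlePoint_sub_sq_of_kernel (hpm : 0 < pm) (hp1 : 0 < p1) (hu : u ≠ 0)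
    (hker : z * stepPolynomial pm p0 p1 u = 1) :
    (saddlePoint pm p1 - u) ^ 2 =
      (1 - z / dominantSingularity pm p0 p1) * (u / (p1 * z)) := by
  have hz : z ≠ 0 := left_ne_zero_of_mul_eq_one hker
  have hmin := stepPolynomial_sub_saddlePoint (p0 := p0) hpm hp1 hu
  rw [stepPolynomial_saddlePoint hpm hp1, eq_div_iff hu] at hmin
  rw [← mul_div_assoc, eq_div_iff (by positivity)]
  linear_combination u * hker - z * hmin

theorem saddlePoint_sub_le_of_kernel (hpm : 0 < pm) (hp1 : 0 < p1)
    (hu : 0 < u) (huτ : u ≤ saddlePoint pm p1) (hker : z * stepPolynomial pm p0 p1 u = 1)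
    (hρz : dominantSingularity pm p0 p1 / 2 ≤ z)
    (hzρ : z < dominantSingularity pm p0 p1) :
    saddlePoint pm p1 - u ≤
      2 * singularCoeff pm p0 p1 * √(1 - z / dominantSingularity pm p0 p1) := by
  have hτ := saddlePoint_pos hpm hp1
  have hz : 0 < z := by linarith
  have hw := one_sub_div_pos hz hzρ
  have hsq := saddlePoint_sub_sq_of_kernel hpm hp1 hu.ne' hker
  have hρ := hz.trans hzρ
  have hC := singularCoeff_pos hpm hp1 hρ
  have hC_sq := singularCoeff_sq hpm hp1 hρ.le
  set τ := saddlePoint pm p1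
  set ρ := dominantSingularity pm p0 p1
  set C := singularCoeff pm p0 p1
  have hfactor : u / (p1 * z) ≤ (2 * C) ^ 2 :=
    calc u / (p1 * z) ≤ τ / (p1 * (ρ / 2)) := by gcongr
      _ = 2 * C ^ 2 := by rw [hC_sq]; field_simp
      _ ≤ (2 * C) ^ 2 := by linarith [sq_nonneg C]
  refine le_of_sq_le_sq ?_ (by positivity)
  rw [hsq, mul_pow, Real.sq_sqrt hw.le, mul_comm]
  gcongr

theorem abs_sub_saddlePoint_add_le_of_kernel (hpm : 0 < pm) (hp1 : 0 < p1)
    (hu : 0 < u) (huτ : u ≤ saddlePoint pm p1) (hker : z * stepPolynomial pm p0 p1 u = 1)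
    (hρz : dominantSingularity pm p0 p1 / 2 ≤ z)
    (hzρ : z < dominantSingularity pm p0 p1) :
    |u - saddlePoint pm p1 +
        singularCoeff pm p0 p1 * √(1 - z / dominantSingularity pm p0 p1)| ≤
      2 * (saddlePoint pm p1 + 2 * singularCoeff pm p0 p1) /
        (p1 * dominantSingularity pm p0 p1 * singularCoeff pm p0 p1) *
        (1 - z / dominantSingularity pm p0 p1) := by
  have hτ := saddlePoint_pos hpm hp1
  have hz : 0 < z := by linarith
  have hw := one_sub_div_pos hz hzρ
  have hsq := saddlePoint_sub_sq_of_kernel hpm hp1 hu.ne' hker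
  have hle := saddlePoint_sub_le_of_kernel hpm hp1 hu huτ hker hρz hzρ
  have hρ := hz.trans hzρ
  have hC := singularCoeff_pos hpm hp1 hρ
  have hC_sq := singularCoeff_sq hpm hp1 hρ.le
  set τ := saddlePoint pm p1
  set ρ := dominantSingularity pm p0 p1
  set C := singularCoeff pm p0 p1
  set w := 1 - z / ρ with hw_def
  have : 0 < √w := Real.sqrt_pos.2 hw
  have hs_sq : √w ^ 2 = w := Real.sq_sqrt hw.le
  have hw_le : w ≤ √w :=
    Real.le_sqrt_of_sq_le (pow_le_of_le_one hw.le (sub_le_self _ (by positivity)) two_ne_zero)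
  have hdiff : (τ - u) ^ 2 - (C * √w) ^ 2 = w * (τ * w - (τ - u)) / (p1 * z) := by
    rw [hsq, mul_pow, hs_sq, hC_sq, hw_def]
    field_simp
    ring
  have hnum : |τ * w - (τ - u)| ≤ (τ + 2 * C) * √w := by
    have hτw : τ * w ≤ τ * √w := by gcongr
    have : 0 ≤ τ * w := by positivity
    exact abs_le.2 ⟨by linarith, by linarith⟩
  calc |u - τ + C * √w| = |τ - u - C * √w| := by rw [← abs_neg]; congr 1; ring
    _ ≤ |(τ - u) ^ 2 - (C * √w) ^ 2| / (C * √w) :=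
      abs_sub_le_abs_sq_sub_sq_div (sub_nonneg.2 huτ) (by positivity)
    _ = w * |τ * w - (τ - u)| / (p1 * z) / (C * √w) := by
      rw [hdiff, abs_div, abs_mul, abs_of_pos hw, abs_of_pos (mul_pos hp1 hz)]
    _ ≤ w * ((τ + 2 * C) * √w) / (p1 * (ρ / 2)) / (C * √w) := by gcongr
    _ = 2 * (τ + 2 * C) / (p1 * ρ * C) * w := by field_simp

end KernelEquation

theorem small_branch_expansion_general {pm p0 p1 : ℝ} (hpm : 0 < pm) (hp1 : 0 < p1)
    (hP : 0 < p0 + 2 * √(pm * p1)) :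
    (∀ z : ℝ, 0 < z → z < dominantSingularity pm p0 p1 → 0 < kernelDiscrim pm p0 p1 z) ∧
    ∃ M : ℝ, 0 < M ∧ ∃ η : ℝ, 0 < η ∧ ∀ z : ℝ,
      dominantSingularity pm p0 p1 - η < z → z < dominantSingularity pm p0 p1 →
      |smallBranch pm p0 p1 z - saddlePoint pm p1 +
          singularCoeff pm p0 p1 * √(1 - z / dominantSingularity pm p0 p1)| ≤
        M * (1 - z / dominantSingularity pm p0 p1) := by
  have hρ : 0 < dominantSingularity pm p0 p1 := one_div_pos.2 hP
  have hτ := saddlePoint_pos hpm hp1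
  have hC := singularCoeff_pos hpm hp1 hρ
  refine ⟨fun z => kernelDiscrim_pos hpm hp1,
    2 * (saddlePoint pm p1 + 2 * singularCoeff pm p0 p1) /
      (p1 * dominantSingularity pm p0 p1 * singularCoeff pm p0 p1), by positivity,
    dominantSingularity pm p0 p1 / 2, half_pos hρ, fun z hηz hzρ => ?_⟩
  have hz : 0 < z := by linarith
  exact abs_sub_saddlePoint_add_le_of_kernel hpm hp1 (smallBranch_pos hpm hp1 hz hzρ)
    (smallBranch_le_saddlePoint hpm hp1 hz hzρ) (mul_stepPolynomial_smallBranch hpm hp1 hz hzρ)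
    (by linarith) hzρ

/-- **Singular expansion of the small branch** `u₁(z) = τ - C√(1-z/ρ) + O(1-z/ρ)`
as `z → ρ⁻`, for Motzkin paths. -/
theorem small_branch_expansion (pm p0 p1 : ℝ) (hpm : 0 < pm) (hp0 : 0 < p0) (hp1 : 0 < p1) :
    let τ : ℝ := Real.sqrt (pm / p1)
    let Pτ : ℝ := pm * τ⁻¹ + p0 + p1 * τ
    let ρ : ℝ := 1 / (p0 + 2 * Real.sqrt (pm * p1))
    let C : ℝ := Real.sqrt (2 * Pτ / (2 * pm / τ ^ 3))
    let u₁ : ℝ → ℝ := fun z =>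
      (1 - p0 * z - Real.sqrt ((1 - p0 * z) ^ 2 - 4 * pm * p1 * z ^ 2)) / (2 * p1 * z)
    (∀ z : ℝ, 0 < z → z < ρ → 0 < (1 - p0 * z) ^ 2 - 4 * pm * p1 * z ^ 2) ∧
    ∃ M : ℝ, 0 < M ∧ ∃ η : ℝ, 0 < η ∧ ∀ z : ℝ, ρ - η < z → z < ρ →
      |u₁ z - τ + C * Real.sqrt (1 - z / ρ)| ≤ M * (1 - z / ρ) :=
  small_branch_expansion_general hpm hp1 (by positivity)
end

section
/- Fix positive reals p₋₁, p₀, p₁, let P(u) = p₋₁u⁻¹ + p₀ + p₁u, τ = √(p₋₁/p₁), ρ = 1/(p₀ + 2√(p₋₁p₁)), C = √(2P(τ)/P″(τ)) with P″(τ) = 2p₋₁/τ³. Let b_n denote the total weight of Motzkin bridges of length n. Then the series B(z) = Σ_{n≥0} b_n zⁿ converges for every real z with 0 ≤ z < ρ, and lim_{z→ρ⁻} √(1 − z/ρ) · B(z) = C/(2τ). -/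
open scoped BigOperators Classical

/-- Value of a step encoded by `Fin 3`: `0 ↦ -1`, `1 ↦ 0`, `2 ↦ +1`. -/
def stepVal (s : Fin 3) : ℤ := (s : ℤ) - 1

/-- Weight of a single step: `p₋₁` for `-1`, `p₀` for `0`, `p₁` for `+1`. -/
def stepWeight (pm p0 p1 : ℝ) (s : Fin 3) : ℝ :=
  if s = 0 then pm else if s = 1 then p0 else p1

/-- Weight of a Motzkin walk (product of its step weights). -/
def walkWeight (pm p0 p1 : ℝ) {n : ℕ} (w : Fin n → Fin 3) : ℝ :=
  ∏ i, stepWeight pm p0 p1 (w i)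

/-- Partial sum `ω_j` of the walk `w`. -/
def psum {n : ℕ} (w : Fin n → Fin 3) (j : ℕ) : ℤ :=
  ∑ i ∈ Finset.univ.filter (fun i : Fin n => (i : ℕ) < j), stepVal (w i)

/-- Total weight of Motzkin bridges of length `n`. -/
noncomputable def bridgeW (pm p0 p1 : ℝ) (n : ℕ) : ℝ :=
  ∑ w ∈ Finset.univ.filter (fun w : Fin n → Fin 3 => psum w n = 0),
    walkWeight pm p0 p1 w

/-- Number of returns to zero of a walk of length `n`. -/
def retZero {n : ℕ} (w : Fin n → Fin 3) : ℕ :=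
  ((Finset.Icc 1 n).filter (fun j => psum w j = 0)).card

/-- Total weight of walks of length `n` with exactly `k` returns to zero. -/
noncomputable def walkRetW (pm p0 p1 : ℝ) (n k : ℕ) : ℝ :=
  ∑ w ∈ Finset.univ.filter (fun w : Fin n → Fin 3 => retZero w = k),
    walkWeight pm p0 p1 w

/-- Number of sign changes of a walk of length `n`. -/
def signChanges {n : ℕ} (w : Fin n → Fin 3) : ℕ :=
  (((Finset.range (n+1)) ×ˢ (Finset.range (n+1))).filter
    (fun p => p.1 < p.2 ∧ psum w p.1 * psum w p.2 < 0 ∧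
      ∀ l ∈ Finset.Ioo p.1 p.2, psum w l = 0)).card

/-- Total weight of bridges of length `n` with exactly `k` sign changes. -/
noncomputable def bridgeSignW (pm p0 p1 : ℝ) (n k : ℕ) : ℝ :=
  ∑ w ∈ Finset.univ.filter
      (fun w : Fin n → Fin 3 => psum w n = 0 ∧ signChanges w = k),
    walkWeight pm p0 p1 w

/-- Total weight of positive excursions of length `n`. -/
noncomputable def posExcW (pm p0 p1 : ℝ) (n : ℕ) : ℝ :=
  ∑ w ∈ Finset.univ.filter
      (fun w : Fin n → Fin 3 => psum w n = 0 ∧ ∀ j ∈ Finset.range (n+1), 0 ≤ psum w j),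
    walkWeight pm p0 p1 w

/-- Total weight of negative excursions of length `n`. -/
noncomputable def negExcW (pm p0 p1 : ℝ) (n : ℕ) : ℝ :=
  ∑ w ∈ Finset.univ.filter
      (fun w : Fin n → Fin 3 => psum w n = 0 ∧ ∀ j ∈ Finset.range (n+1), psum w j ≤ 0),
    walkWeight pm p0 p1 w

/-- A positive bridge: a bridge whose last nonzero partial sum is positive. -/
def IsPosBridge {n : ℕ} (w : Fin n → Fin 3) : Prop :=
  psum w n = 0 ∧ ∃ j ∈ Finset.range (n+1),
    0 < psum w j ∧ ∀ l ∈ Finset.Ioc j n, psum w l = 0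

/-- A negative bridge: a bridge whose last nonzero partial sum is negative. -/
def IsNegBridge {n : ℕ} (w : Fin n → Fin 3) : Prop :=
  psum w n = 0 ∧ ∃ j ∈ Finset.range (n+1),
    psum w j < 0 ∧ ∀ l ∈ Finset.Ioc j n, psum w l = 0

instance {n : ℕ} (w : Fin n → Fin 3) : Decidable (IsPosBridge w) := by
  unfold IsPosBridge; infer_instance

instance {n : ℕ} (w : Fin n → Fin 3) : Decidable (IsNegBridge w) := by
  unfold IsNegBridge; infer_instance

/-- Total weight of positive bridges of length `n` with `k` sign changes. -/
noncomputable def posBridgeSignW (pm p0 p1 : ℝ) (n k : ℕ) : ℝ :=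
  ∑ w ∈ Finset.univ.filter
      (fun w : Fin n → Fin 3 => IsPosBridge w ∧ signChanges w = k),
    walkWeight pm p0 p1 w

/-- Total weight of negative bridges of length `n` with `k` sign changes. -/
noncomputable def negBridgeSignW (pm p0 p1 : ℝ) (n k : ℕ) : ℝ :=
  ∑ w ∈ Finset.univ.filter
      (fun w : Fin n → Fin 3 => IsNegBridge w ∧ signChanges w = k),
    walkWeight pm p0 p1 w

/-- Total weight of walks of length `n` with `k` sign changes. -/
noncomputable def walkSignW (pm p0 p1 : ℝ) (n k : ℕ) : ℝ :=
  ∑ w ∈ Finset.univ.filter (fun w : Fin n → Fin 3 => signChanges w = k),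
    walkWeight pm p0 p1 w

/-- Height of a walk of length `n` (as a natural number; it is `max_j ω_j ≥ 0`). -/
def height {n : ℕ} (w : Fin n → Fin 3) : ℕ :=
  (Finset.range (n+1)).sup (fun j => (psum w j).toNat)

/-- Total weight of walks of length `n` of height exactly `h`. -/
noncomputable def heightW (pm p0 p1 : ℝ) (n h : ℕ) : ℝ :=
  ∑ w ∈ Finset.univ.filter (fun w : Fin n → Fin 3 => height w = h),
    walkWeight pm p0 p1 w

/-!
Replacing `p₋₁, p₁` by `p₋₁ / t, p₁ t` multiplies the weight of a walk by `t` to the power of its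
endpoint, so it does not change bridge weights. With `t = τ` both weights become `s = √(p₋₁ p₁)`
and `b_n = (Tⁿ δ₀)(0)`, where `T` is the transfer operator of the symmetric walk. On bounded
functions `T` has norm at most `p₀ + 2 s = 1 / ρ`, so below `ρ` the Neumann series gives
`B(z) = H(0)` for the bounded solution `H` of `H - z T H = δ₀`. That solution is a multiple of
`k ↦ r ^ |k|`, where `r` is the small root of the characteristic equation, and
`H(0) = 1 / √((1 - p₀ z)² - (2 s z)²)`. The difference of squares has the simple factor `1 - z / ρ`.
-/

open Filter Topology

lemma psum_self {n : ℕ} (w : Fin n → Fin 3) : psum w n = ∑ i, stepVal (w i) := by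
  simp [psum]

lemma psum_cons {n : ℕ} (s : Fin 3) (w : Fin n → Fin 3) :
    psum (Fin.cons s w : Fin (n + 1) → Fin 3) (n + 1) = stepVal s + psum w n := by
  simp only [psum_self, Fin.sum_univ_succ, Fin.cons_zero, Fin.cons_succ]

lemma walkWeight_cons (pm p0 p1 : ℝ) {n : ℕ} (s : Fin 3) (w : Fin n → Fin 3) :
    walkWeight pm p0 p1 (Fin.cons s w : Fin (n + 1) → Fin 3) =
      stepWeight pm p0 p1 s * walkWeight pm p0 p1 w := by
  simp only [walkWeight, Fin.prod_univ_succ, Fin.cons_zero, Fin.cons_succ]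

section Tilting

lemma stepWeight_tilt (pm p0 p1 t : ℝ) (s : Fin 3) :
    stepWeight (pm * t⁻¹) p0 (p1 * t) s = stepWeight pm p0 p1 s * t ^ stepVal s := by
  fin_cases s <;> simp [stepWeight, stepVal]

lemma walkWeight_tilt (pm p0 p1 : ℝ) {t : ℝ} (ht : t ≠ 0) {n : ℕ} (w : Fin n → Fin 3) :
    walkWeight (pm * t⁻¹) p0 (p1 * t) w = walkWeight pm p0 p1 w * t ^ psum w n := by
  induction w using Fin.consInduction with
  | elim0 => simp [walkWeight, psum]
  | cons s w ih => rw [walkWeight_cons, walkWeight_cons, psum_cons, zpow_add₀ ht,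
      stepWeight_tilt, ih, mul_mul_mul_comm]

lemma bridgeW_tilt (pm p0 p1 : ℝ) {t : ℝ} (ht : t ≠ 0) (n : ℕ) :
    bridgeW (pm * t⁻¹) p0 (p1 * t) n = bridgeW pm p0 p1 n := by
  refine Finset.sum_congr rfl fun w hw => ?_
  rw [walkWeight_tilt pm p0 p1 ht, (Finset.mem_filter.1 hw).2, zpow_zero, mul_one]

lemma mul_inv_sqrt_div {a b : ℝ} (ha : 0 < a) (hb : 0 < b) : a * (√(a / b))⁻¹ = √(a * b) := by
  rw [Real.sqrt_div' _ hb.le, Real.sqrt_mul ha.le, inv_div, mul_div_assoc',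
    div_eq_iff (by positivity), mul_right_comm, Real.mul_self_sqrt ha.le]

lemma mul_sqrt_div {a b : ℝ} (ha : 0 < a) (hb : 0 < b) : b * √(a / b) = √(a * b) := by
  rw [← inv_div b a, Real.sqrt_inv, mul_inv_sqrt_div hb ha, mul_comm]

lemma bridgeW_eq_bridgeW_sqrt {pm p1 : ℝ} (hpm : 0 < pm) (p0 : ℝ) (hp1 : 0 < p1) (n : ℕ) :
    bridgeW pm p0 p1 n = bridgeW √(pm * p1) p0 √(pm * p1) n := by
  rw [← bridgeW_tilt pm p0 p1 (Real.sqrt_pos.2 (div_pos hpm hp1)).ne',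
    mul_inv_sqrt_div hpm hp1, mul_sqrt_div hpm hp1]

end Tilting

section TransferOperator

/-- The one-step transfer operator of the walk: `h` is sent to its weighted sum over the three
sites reached by one step. Its powers encode sums over walks. -/
def transferOp (pm p0 p1 : ℝ) : Module.End ℝ (ℤ → ℝ) where
  toFun h k := ∑ s, stepWeight pm p0 p1 s * h (k + stepVal s)
  map_add' f g := by
    ext k
    simp only [Pi.add_apply, mul_add, Finset.sum_add_distrib]
  map_smul' c h := by
    ext k
    simp only [Pi.smul_apply, smul_eq_mul, Finset.mul_sum, mul_left_comm, RingHom.id_apply]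

variable (pm p0 p1 : ℝ)

lemma transferOp_apply (h : ℤ → ℝ) (k : ℤ) :
    transferOp pm p0 p1 h k = ∑ s, stepWeight pm p0 p1 s * h (k + stepVal s) :=
  rfl

lemma transferOp_apply_eq_add (h : ℤ → ℝ) (k : ℤ) :
    transferOp pm p0 p1 h k = pm * h (k - 1) + p0 * h k + p1 * h (k + 1) := by
  simp [transferOp_apply, Fin.sum_univ_three, stepWeight, stepVal, sub_eq_add_neg]

lemma transferOp_pow_apply (n : ℕ) (h : ℤ → ℝ) (k : ℤ) :
    (transferOp pm p0 p1 ^ n) h k =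
      ∑ w : Fin n → Fin 3, walkWeight pm p0 p1 w * h (k + psum w n) := by
  induction n generalizing k with
  | zero => simp [walkWeight, psum]
  | succ n ih =>
    rw [pow_succ', Module.End.mul_apply, transferOp_apply,
      ← (Fin.consEquiv fun _ : Fin (n + 1) => Fin 3).sum_comp, Fintype.sum_prod_type]
    simp only [ih, Finset.mul_sum, Fin.consEquiv, Equiv.coe_fn_mk, walkWeight_cons, psum_cons,
      mul_assoc, add_assoc]

lemma bridgeW_eq_transferOp_pow (n : ℕ) :
    bridgeW pm p0 p1 n = (transferOp pm p0 p1 ^ n) (Pi.single 0 1) 0 := by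
  simp only [bridgeW, transferOp_pow_apply, zero_add, Pi.single_apply, mul_ite, mul_one, mul_zero,
    Finset.sum_filter]

variable {pm p0 p1}

lemma abs_transferOp_apply_le {h : ℤ → ℝ} {c : ℝ} (hc : ∀ k, |h k| ≤ c) (k : ℤ) :
    |transferOp pm p0 p1 h k| ≤ (|pm| + |p0| + |p1|) * c := by
  rw [transferOp_apply_eq_add]
  calc |pm * h (k - 1) + p0 * h k + p1 * h (k + 1)|
      ≤ |pm| * |h (k - 1)| + |p0| * |h k| + |p1| * |h (k + 1)| := by
        simpa only [abs_mul] using abs_add_three (pm * h (k - 1)) (p0 * h k) (p1 * h (k + 1))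
    _ ≤ |pm| * c + |p0| * c + |p1| * c := by gcongr <;> exact hc _
    _ = (|pm| + |p0| + |p1|) * c := by ring

lemma abs_transferOp_pow_apply_le {h : ℤ → ℝ} {c : ℝ} (hc : ∀ k, |h k| ≤ c) (n : ℕ) (k : ℤ) :
    |(transferOp pm p0 p1 ^ n) h k| ≤ (|pm| + |p0| + |p1|) ^ n * c := by
  induction n generalizing k with
  | zero => simpa using hc k
  | succ n ih =>
    rw [pow_succ', Module.End.mul_apply, pow_succ', mul_assoc]
    exact abs_transferOp_apply_le ih k

lemma abs_transferOp_pow_apply_mul_pow_le {h : ℤ → ℝ} {c : ℝ} (hc : ∀ k, |h k| ≤ c) (z : ℝ)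
    (n : ℕ) (k : ℤ) :
    |(transferOp pm p0 p1 ^ n) h k * z ^ n| ≤ c * (|z| * (|pm| + |p0| + |p1|)) ^ n := by
  rw [abs_mul, abs_pow, mul_pow, mul_left_comm, mul_comm]
  gcongr
  rw [mul_comm]
  exact abs_transferOp_pow_apply_le hc n k

variable {z : ℝ}

lemma summable_bridgeW_mul_pow (hz : |z| * (|pm| + |p0| + |p1|) < 1) :
    Summable fun n => bridgeW pm p0 p1 n * z ^ n := by
  have hδ (k : ℤ) : |(Pi.single 0 1 : ℤ → ℝ) k| ≤ 1 := by
    rw [Pi.single_apply]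
    split_ifs <;> simp
  simp only [bridgeW_eq_transferOp_pow]
  exact .of_norm_bounded ((summable_geometric_of_lt_one (by positivity) hz).mul_left 1)
    fun n => abs_transferOp_pow_apply_mul_pow_le hδ z n 0

lemma sum_bridgeW_mul_pow_eq_sub {H : ℤ → ℝ}
    (hH : H - z • transferOp pm p0 p1 H = Pi.single 0 1) (N : ℕ) :
    ∑ n ∈ Finset.range N, bridgeW pm p0 p1 n * z ^ n =
      H 0 - (transferOp pm p0 p1 ^ N) H 0 * z ^ N := by
  have hgeom := congrFun
    (LinearMap.congr_fun (geom_sum_mul_neg (z • transferOp pm p0 p1) N) H) 0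
  have hδ : (1 - z • transferOp pm p0 p1) H = Pi.single 0 1 := hH
  rw [Module.End.mul_apply, hδ] at hgeom
  simpa [smul_pow, ← bridgeW_eq_transferOp_pow, mul_comm] using hgeom

lemma hasSum_bridgeW_of_resolvent (hz : |z| * (|pm| + |p0| + |p1|) < 1) {H : ℤ → ℝ} {c : ℝ}
    (hc : ∀ k, |H k| ≤ c) (hH : H - z • transferOp pm p0 p1 H = Pi.single 0 1) :
    HasSum (fun n => bridgeW pm p0 p1 n * z ^ n) (H 0) := by
  have hremainder : Tendsto (fun N => (transferOp pm p0 p1 ^ N) H 0 * z ^ N) atTop (𝓝 0) :=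
    squeeze_zero_norm (fun N => abs_transferOp_pow_apply_mul_pow_le hc z N 0) <| by
      simpa using (tendsto_pow_atTop_nhds_zero_of_lt_one (by positivity) hz).const_mul c
  rw [(summable_bridgeW_mul_pow hz).hasSum_iff_tendsto_nat]
  simpa only [sum_bridgeW_mul_pow_eq_sub hH, sub_zero] using hremainder.const_sub (H 0)

end TransferOperator

section ClosedForm

lemma pow_natAbs_sub_smul_transferOp {s p0 z r : ℝ}
    (hr : s * z * (1 + r ^ 2) = (1 - p0 * z) * r) :
    (fun k : ℤ => r ^ k.natAbs) - z • transferOp s p0 s (fun k => r ^ k.natAbs) =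
      Pi.single 0 (1 - p0 * z - 2 * (s * z) * r) := by
  ext k
  simp only [Pi.sub_apply, Pi.smul_apply, smul_eq_mul, transferOp_apply_eq_add, Pi.single_apply]
  rcases eq_or_ne k 0 with rfl | hk
  · simp only [if_pos, zero_sub, zero_add, Int.natAbs_neg, Int.natAbs_one, Int.natAbs_zero,
      pow_one, pow_zero]
    ring
  · obtain ⟨n, hself, ⟨hpred, hsucc⟩ | ⟨hpred, hsucc⟩⟩ : ∃ n, k.natAbs = n + 1 ∧
        ((k - 1).natAbs = n ∧ (k + 1).natAbs = n + 2 ∨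
          (k - 1).natAbs = n + 2 ∧ (k + 1).natAbs = n) :=
      ⟨k.natAbs - 1, by lia, by lia⟩
    all_goals
      rw [if_neg hk, hpred, hself, hsucc]
      linear_combination (-r ^ n) * hr

lemma exists_small_root {a b : ℝ} (hab : 2 * |b| < a) :
    ∃ r, |r| ≤ 1 ∧ b * (1 + r ^ 2) = a * r ∧ a - 2 * b * r = √(a ^ 2 - (2 * b) ^ 2) := by
  have ha : 0 < a := by linarith [abs_nonneg b]
  have hΔ : 0 ≤ a ^ 2 - (2 * b) ^ 2 := by
    rw [sub_nonneg, sq_le_sq, abs_mul, abs_two, abs_of_pos ha]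
    exact hab.le
  set D := √(a ^ 2 - (2 * b) ^ 2)
  have hD : D ^ 2 = a ^ 2 - (2 * b) ^ 2 := Real.sq_sqrt hΔ
  have haD : 0 < a + D := by positivity
  refine ⟨2 * b / (a + D), ?_, ?_, ?_⟩
  · rw [abs_div, abs_mul, abs_two, abs_of_pos haD, div_le_one haD]
    exact hab.le.trans (le_add_of_nonneg_right (Real.sqrt_nonneg _))
  · field_simp
    linear_combination b * hD
  · field_simp
    linear_combination -hD

lemma hasSum_bridgeW_symm {s p0 z : ℝ} (hz : |z| * (|s| + |p0| + |s|) < 1) :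
    HasSum (fun n => bridgeW s p0 s n * z ^ n) (√((1 - p0 * z) ^ 2 - (2 * (s * z)) ^ 2))⁻¹ := by
  have hlt : 2 * |s * z| < 1 - p0 * z := by
    have := le_abs_self (p0 * z)
    rw [abs_mul] at this ⊢
    linarith
  obtain ⟨r, hr, hroot, hD⟩ := exists_small_root hlt
  have hDpos : 0 < √((1 - p0 * z) ^ 2 - (2 * (s * z)) ^ 2) := by
    rw [Real.sqrt_pos, sub_pos, sq_lt_sq, abs_mul, abs_two]
    exact hlt.trans_le (le_abs_self _)
  set D := √((1 - p0 * z) ^ 2 - (2 * (s * z)) ^ 2)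
  have hbound (k : ℤ) : |(D⁻¹ • fun k : ℤ => r ^ k.natAbs) k| ≤ D⁻¹ := by
    rw [Pi.smul_apply, smul_eq_mul, abs_mul, abs_pow, abs_of_pos (inv_pos.2 hDpos)]
    exact mul_le_of_le_one_right (inv_pos.2 hDpos).le (pow_le_one₀ (abs_nonneg r) hr)
  have hresolvent : (D⁻¹ • fun k : ℤ => r ^ k.natAbs) -
      z • transferOp s p0 s (D⁻¹ • fun k : ℤ => r ^ k.natAbs) = Pi.single 0 1 := by
    rw [map_smul, smul_comm, ← smul_sub, pow_natAbs_sub_smul_transferOp hroot, hD,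
      ← Pi.single_smul', smul_eq_mul, inv_mul_cancel₀ hDpos.ne']
  simpa using hasSum_bridgeW_of_resolvent hz hbound hresolvent

lemma hasSum_bridgeW {pm p0 p1 z : ℝ} (hpm : 0 < pm) (hp1 : 0 < p1)
    (hz : |z| * (|p0| + 2 * √(pm * p1)) < 1) :
    HasSum (fun n => bridgeW pm p0 p1 n * z ^ n)
      (√((1 - p0 * z) ^ 2 - (2 * (√(pm * p1) * z)) ^ 2))⁻¹ := by
  simp only [bridgeW_eq_bridgeW_sqrt hpm p0 hp1]
  refine hasSum_bridgeW_symm ?_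
  rw [abs_of_nonneg (Real.sqrt_nonneg _)]
  linarith

end ClosedForm

section Singularity

lemma tendsto_sqrt_mul_inv_sqrt_sub_sq {p s : ℝ} (hs : 0 < s) (hps : 0 < p + 2 * s) :
    Tendsto (fun z => √(1 - z * (p + 2 * s)) * (√((1 - p * z) ^ 2 - (2 * (s * z)) ^ 2))⁻¹)
      (𝓝[<] (1 / (p + 2 * s))) (𝓝 √((p + 2 * s) / (4 * s))) := by
  have hvalue : (√(1 - 1 / (p + 2 * s) * (p - 2 * s)))⁻¹ = √((p + 2 * s) / (4 * s)) := by
    rw [← Real.sqrt_inv]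
    congr 1
    field_simp
    ring
  have hcont : ContinuousAt (fun z => (√(1 - z * (p - 2 * s)))⁻¹) (1 / (p + 2 * s)) := by
    refine ContinuousAt.inv₀ (by fun_prop) (inv_eq_zero.not.1 ?_)
    rw [hvalue]
    positivity
  rw [← hvalue]
  refine (hcont.tendsto.mono_left nhdsWithin_le_nhds).congr' ?_
  filter_upwards [self_mem_nhdsWithin] with z hz
  have hpos : 0 < 1 - z * (p + 2 * s) := sub_pos.2 ((lt_div_iff₀ hps).1 hz)
  have hfactor : (1 - p * z) ^ 2 - (2 * (s * z)) ^ 2 =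
      (1 - z * (p + 2 * s)) * (1 - z * (p - 2 * s)) := by ring
  rw [hfactor, Real.sqrt_mul hpos.le, mul_inv, mul_inv_cancel_left₀ (Real.sqrt_pos.2 hpos).ne']

lemma sqrt_saddle_div_eq {pm p1 : ℝ} (hpm : 0 < pm) (p0 : ℝ) (hp1 : 0 < p1) :
    √(2 * (pm * (√(pm / p1))⁻¹ + p0 + p1 * √(pm / p1)) / (2 * pm / √(pm / p1) ^ 3)) /
      (2 * √(pm / p1)) = √((p0 + 2 * √(pm * p1)) / (4 * √(pm * p1))) := by
  have hτ : 0 < √(pm / p1) := Real.sqrt_pos.2 (div_pos hpm hp1)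
  rw [mul_sqrt_div hpm hp1, ← mul_inv_sqrt_div hpm hp1]
  set τ := √(pm / p1)
  rw [div_eq_iff (by positivity), ← Real.sqrt_mul_self (by positivity : 0 ≤ 2 * τ),
    ← Real.sqrt_mul' _ (by positivity)]
  congr 1
  field_simp
  ring

end Singularity

/-- **Asymptotics of the bridge generating function**: `B(z) = Σ b_n zⁿ` converges
for `0 ≤ z < ρ` and `√(1-z/ρ)·B(z) → C/(2τ)` as `z → ρ⁻`. -/
theorem bridge_gf_singularity (pm p0 p1 : ℝ)
    (hpm : 0 < pm) (hp0 : 0 < p0) (hp1 : 0 < p1) :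
    let τ : ℝ := Real.sqrt (pm / p1)
    let Pτ : ℝ := pm * τ⁻¹ + p0 + p1 * τ
    let ρ : ℝ := 1 / (p0 + 2 * Real.sqrt (pm * p1))
    let C : ℝ := Real.sqrt (2 * Pτ / (2 * pm / τ ^ 3))
    let B : ℝ → ℝ := fun z => ∑' n : ℕ, bridgeW pm p0 p1 n * z ^ n
    (∀ z : ℝ, 0 ≤ z → z < ρ → Summable (fun n : ℕ => bridgeW pm p0 p1 n * z ^ n)) ∧
    Filter.Tendsto (fun z : ℝ => Real.sqrt (1 - z / ρ) * B z)
      (nhdsWithin ρ (Set.Iio ρ)) (nhds (C / (2 * τ))) := by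
  intro τ Pτ ρ C B
  have hs : 0 < √(pm * p1) := Real.sqrt_pos.2 (mul_pos hpm hp1)
  have hden : 0 < p0 + 2 * √(pm * p1) := by positivity
  have hsum (z : ℝ) (hz : 0 ≤ z) (hzρ : z < ρ) := hasSum_bridgeW (p0 := p0) (z := z) hpm hp1 <| by
    rw [abs_of_nonneg hz, abs_of_pos hp0]
    exact (lt_div_iff₀ hden).1 hzρ
  refine ⟨fun z hz hzρ => (hsum z hz hzρ).summable, ?_⟩
  have hlimit : C / (2 * τ) = √((p0 + 2 * √(pm * p1)) / (4 * √(pm * p1))) :=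
    sqrt_saddle_div_eq hpm p0 hp1
  rw [hlimit]
  refine (tendsto_sqrt_mul_inv_sqrt_sub_sq hs hden).congr' ?_
  filter_upwards [Ioo_mem_nhdsLT (one_div_pos.2 hden)] with z hz
  have hdiv : z / ρ = z * (p0 + 2 * √(pm * p1)) := by rw [div_div_eq_mul_div, div_one]
  have hB : B z = _ := (hsum z hz.1.le hz.2).tsum_eq
  rw [hdiv, hB]
end

section
/- Fix positive reals p₋₁, p₀, p₁ and set ρ = 1/(p₀ + 2√(p₋₁p₁)). Let b_n be the total weight of Motzkin bridges of length n and B(z) = Σ_{n≥0} b_n zⁿ (which converges and satisfies B(z) ≥ 1 for 0 ≤ z < ρ), and define the generating function of arches A(z) = 1 − 1/B(z). Then there exist an open neighborhood U ⊆ ℂ of ρ and functions a, b analytic on U such that for every real z ∈ U with 0 < z < ρ, A(z) = a(z) + b(z)·√(1 − z/ρ). -/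
open scoped BigOperators Classical

/-!
With `P(x) = p₋₁x⁻¹ + p₀ + p₁x`, the number `b_n` is the constant coefficient of `P(x)ⁿ`. On the
circle `|x| = √(p₋₁/p₁)` one has `|P| ≤ P(√(p₋₁/p₁)) = 1/ρ`, so for `|z| < ρ` Cauchy's formula and a
geometric series give `B(z) = (2πi)⁻¹ ∮ dx / (x - z x P(x))`. Exactly one root of the quadratic
denominator lies inside the circle, and its residue is `1/√((1 - p₀z)² - 4p₋₁p₁z²)`. Hence `1/B` is
the square root of `(1 - z/ρ)(1 - (p₀ - 2√(p₋₁p₁))z)`, whose second factor is positive at `ρ` and so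
has an analytic square root nearby.
-/

open Complex Metric Set
open scoped Real

section CircleIntegral

lemma hasSum_circleIntegral_of_norm_le {ι E : Type*} [Countable ι] [NormedAddCommGroup E]
    [NormedSpace ℂ E] [CompleteSpace E] {F : ι → ℂ → E} {u : ι → ℝ} {c : ℂ} {R : ℝ} (hR : 0 ≤ R)
    (hF : ∀ i, ContinuousOn (F i) (sphere c R)) (hu : Summable u)
    (hFu : ∀ i, ∀ x ∈ sphere c R, ‖F i x‖ ≤ u i) :
    HasSum (fun i ↦ ∮ x in C(c, R), F i x) (∮ x in C(c, R), ∑' i, F i x) := by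
  have hlim := (tendstoUniformlyOn_tsum hu hFu).tendsto_circleIntegral_of_continuousOn hR
    (.of_forall fun t ↦ continuousOn_finsetSum t fun i _ ↦ hF i)
  refine hlim.congr fun t ↦ ?_
  exact circleIntegral.integral_fun_sum fun i _ ↦ (hF i).circleIntegrable hR

lemma circleIntegral_sub_center_zpow (n : ℤ) (c : ℂ) {R : ℝ} (hR : R ≠ 0) :
    (∮ x in C(c, R), (x - c) ^ n) = if n = -1 then 2 * π * I else 0 := by
  split_ifs with hn
  · simpa only [hn, zpow_neg_one] using circleIntegral.integral_sub_center_inv c hR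
  · exact circleIntegral.integral_sub_zpow_of_ne hn c c R

lemma circleIntegral_inv_sub_mul_sub {a c d : ℂ} {R : ℝ} (ha : ‖a‖ < R) (hcd : ‖d‖ * R < ‖c‖) :
    (∮ x in C(0, R), ((x - a) * (c - d * x))⁻¹) = 2 * π * I * (c - d * a)⁻¹ := by
  have hne : ∀ x ∈ closedBall (0 : ℂ) R, c - d * x ≠ 0 := fun x hx hzero ↦ by
    have hle : ‖c‖ ≤ ‖d‖ * R := by
      rw [sub_eq_zero.1 hzero, norm_mul]
      gcongr
      exact mem_closedBall_zero_iff.1 hx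
    exact hle.not_gt hcd
  have hdiff : DifferentiableOn ℂ (fun x ↦ (c - d * x)⁻¹) (closedBall 0 R) :=
    DifferentiableOn.inv (by fun_prop) hne
  simpa only [mul_inv, smul_eq_mul] using
    hdiff.circleIntegral_sub_inv_smul (mem_ball_zero_iff.2 ha)

end CircleIntegral

lemma mul_sqrt_div_eq_sqrt_mul {a : ℝ} (ha : 0 ≤ a) (b : ℝ) : b * √(a / b) = √(a * b) := by
  rw [Real.sqrt_div ha, Real.sqrt_mul ha, mul_div_left_comm, Real.div_sqrt]

lemma prod_zpow_eq_zpow_sum {ι G₀ : Type*} [CommGroupWithZero G₀] {x : G₀} (hx : x ≠ 0)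
    (s : Finset ι) (f : ι → ℤ) : ∏ i ∈ s, x ^ f i = x ^ ∑ i ∈ s, f i := by
  induction s using Finset.cons_induction with
  | empty => simp
  | cons i s hi ih => rw [Finset.prod_cons, Finset.sum_cons, zpow_add₀ hx, ih]

section StepPolynomial

/-- The step Laurent polynomial `P(x) = p₋₁x⁻¹ + p₀ + p₁x`, whose `n`-th power enumerates the walks
of length `n` by final height; it is only meaningful for `x ≠ 0`. -/
noncomputable def stepLaurent (pm p0 p1 : ℝ) (x : ℂ) : ℂ := pm * x⁻¹ + p0 + p1 * x

variable (pm p0 p1 : ℝ)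

lemma stepLaurent_eq_sum (x : ℂ) :
    stepLaurent pm p0 p1 x = ∑ s, (stepWeight pm p0 p1 s : ℂ) * x ^ stepVal s := by
  simp [Fin.sum_univ_three, stepWeight, stepLaurent, stepVal]

lemma continuousOn_stepLaurent : ContinuousOn (stepLaurent pm p0 p1) {0}ᶜ := by
  unfold stepLaurent
  fun_prop (disch := simp)

lemma stepLaurent_pow {x : ℂ} (hx : x ≠ 0) (n : ℕ) :
    stepLaurent pm p0 p1 x ^ n =
      ∑ w : Fin n → Fin 3, (walkWeight pm p0 p1 w : ℂ) * x ^ psum w n := by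
  have hpsum (w : Fin n → Fin 3) : ∏ i, x ^ stepVal (w i) = x ^ psum w n := by
    simp [psum, prod_zpow_eq_zpow_sum hx]
  simp only [stepLaurent_eq_sum, Finset.sum_pow', Fintype.piFinset_univ, Finset.prod_mul_distrib,
    hpsum, walkWeight, ofReal_prod]

lemma circleIntegral_stepLaurent_pow_mul_inv {R : ℝ} (hR : 0 < R) (n : ℕ) :
    (∮ x in C(0, R), stepLaurent pm p0 p1 x ^ n * x⁻¹) = 2 * π * I * bridgeW pm p0 p1 n := by
  have hexpand : EqOn (fun x ↦ stepLaurent pm p0 p1 x ^ n * x⁻¹)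
      (fun x ↦ ∑ w : Fin n → Fin 3, (walkWeight pm p0 p1 w : ℂ) * (x - 0) ^ (psum w n - 1))
      (sphere 0 R) := fun x hx ↦ by
    have hx0 : x ≠ 0 := ne_of_mem_sphere hx hR.ne'
    simp only [stepLaurent_pow pm p0 p1 hx0, Finset.sum_mul, sub_zero, zpow_sub_one₀ hx0,
      mul_assoc]
  have hint (w : Fin n → Fin 3) : CircleIntegrable
      (fun x ↦ (walkWeight pm p0 p1 w : ℂ) * (x - 0) ^ (psum w n - 1)) 0 R := by
    refine ContinuousOn.circleIntegrable hR.le (.mul continuousOn_const (.zpow₀ (by fun_prop) _ ?_))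
    exact fun x hx ↦ .inl (sub_ne_zero.2 (ne_of_mem_sphere hx hR.ne'))
  rw [circleIntegral.integral_congr hR.le hexpand, circleIntegral.integral_fun_sum fun w _ ↦ hint w]
  simp only [circleIntegral.integral_const_mul, circleIntegral_sub_center_zpow _ _ hR.ne',
    sub_eq_neg_self, mul_ite, mul_zero, ← Finset.sum_filter, ← Finset.sum_mul, bridgeW,
    ofReal_sum]
  ring

lemma hasSum_bridgeW_circleIntegral {R q : ℝ} {z : ℂ} (hR : 0 < R) (hq : q < 1)
    (hzq : ∀ x ∈ sphere (0 : ℂ) R, ‖z * stepLaurent pm p0 p1 x‖ ≤ q) :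
    HasSum (fun n ↦ (bridgeW pm p0 p1 n : ℂ) * z ^ n)
      ((2 * π * I)⁻¹ * ∮ x in C(0, R), (x - z * (pm + p0 * x + p1 * x ^ 2))⁻¹) := by
  have hne : ∀ x ∈ sphere (0 : ℂ) R, x ≠ 0 := fun x hx ↦ ne_of_mem_sphere hx hR.ne'
  have hq0 : 0 ≤ q := (norm_nonneg _).trans (hzq R (by simp [hR.le]))
  have hcont (n : ℕ) :
      ContinuousOn (fun x ↦ (z * stepLaurent pm p0 p1 x) ^ n * x⁻¹) (sphere 0 R) :=
    ((continuousOn_const.mul ((continuousOn_stepLaurent pm p0 p1).mono hne)).pow n).mul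
      (continuousOn_id.inv₀ hne)
  have hbound : ∀ n : ℕ, ∀ x ∈ sphere (0 : ℂ) R,
      ‖(z * stepLaurent pm p0 p1 x) ^ n * x⁻¹‖ ≤ q ^ n * R⁻¹ := fun n x hx ↦ by
    rw [norm_mul, norm_pow, norm_inv, mem_sphere_zero_iff_norm.1 hx]
    gcongr
    exact hzq x hx
  have hsum := hasSum_circleIntegral_of_norm_le hR.le hcont
    ((summable_geometric_of_lt_one hq0 hq).mul_right R⁻¹) hbound
  have hgeom : EqOn (fun x ↦ ∑' n : ℕ, (z * stepLaurent pm p0 p1 x) ^ n * x⁻¹)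
      (fun x ↦ (x - z * (pm + p0 * x + p1 * x ^ 2))⁻¹) (sphere 0 R) := fun x hx ↦ by
    have hx0 := hne x hx
    beta_reduce
    rw [tsum_mul_right, tsum_geometric_of_norm_lt_one ((hzq x hx).trans_lt hq), ← mul_inv,
      stepLaurent]
    field_simp
  have hterm (n : ℕ) : (∮ x in C(0, R), (z * stepLaurent pm p0 p1 x) ^ n * x⁻¹) =
      2 * π * I * (bridgeW pm p0 p1 n * z ^ n) := by
    simp only [mul_pow, mul_assoc, circleIntegral.integral_const_mul,
      circleIntegral_stepLaurent_pow_mul_inv pm p0 p1 hR]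
    ring
  rw [circleIntegral.integral_congr hR.le hgeom] at hsum
  simpa only [hterm, inv_mul_cancel_left₀ two_pi_I_ne_zero] using hsum.mul_left (2 * π * I)⁻¹

end StepPolynomial

section SaddleCircle

variable {pm p0 p1 : ℝ}

lemma norm_stepLaurent_le (hpm : 0 < pm) (hp1 : 0 < p1) {x : ℂ}
    (hx : ‖x‖ = √(pm / p1)) : ‖stepLaurent pm p0 p1 x‖ ≤ |p0| + 2 * √(pm * p1) := by
  have hup : p1 * ‖x‖ = √(pm * p1) := hx ▸ mul_sqrt_div_eq_sqrt_mul hpm.le p1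
  have hdown : pm * ‖x‖⁻¹ = √(pm * p1) := by
    rw [hx, ← Real.sqrt_inv, inv_div, mul_sqrt_div_eq_sqrt_mul hp1.le pm, mul_comm]
  calc ‖stepLaurent pm p0 p1 x‖
      ≤ ‖(pm * x⁻¹ : ℂ)‖ + ‖(p0 : ℂ)‖ + ‖(p1 * x : ℂ)‖ := norm_add₃_le
    _ = pm * ‖x‖⁻¹ + |p0| + p1 * ‖x‖ := by simp [abs_of_pos hpm, abs_of_pos hp1]
    _ = |p0| + 2 * √(pm * p1) := by rw [hup, hdown]; ring

lemma two_mul_abs_mul_sqrt_lt {z : ℝ} (hz : |z| * (|p0| + 2 * √(pm * p1)) < 1) :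
    2 * |z| * √(pm * p1) < 1 - p0 * z := by
  have hp0z : p0 * z ≤ |z| * |p0| := (le_abs_self _).trans_eq (by rw [abs_mul, mul_comm])
  linarith

lemma exists_kernel_factorization (hpm : 0 < pm) (hp1 : 0 < p1) {z : ℝ}
    (hz : |z| * (|p0| + 2 * √(pm * p1)) < 1) :
    ∃ a c : ℝ, |a| < √(pm / p1) ∧ |z * p1| * √(pm / p1) < |c| ∧
      c - z * p1 * a = √((1 - p0 * z) ^ 2 - 4 * pm * p1 * z ^ 2) ∧
      ∀ x : ℂ, x - z * (pm + p0 * x + p1 * x ^ 2) = (x - a) * (c - (z * p1 : ℝ) * x) := by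
  have hgap := two_mul_abs_mul_sqrt_lt hz
  have hσ_sq : √(pm * p1) ^ 2 = pm * p1 := Real.sq_sqrt (by positivity)
  have hτσ : p1 * √(pm / p1) = √(pm * p1) := mul_sqrt_div_eq_sqrt_mul hpm.le p1
  set Δ := √((1 - p0 * z) ^ 2 - 4 * pm * p1 * z ^ 2)
  set σ := √(pm * p1)
  set τ := √(pm / p1)
  have hτ : 0 < τ := Real.sqrt_pos.2 (div_pos hpm hp1)
  have hΔ : 0 ≤ Δ := Real.sqrt_nonneg _
  have hΔ_sq : Δ ^ 2 = (1 - p0 * z) ^ 2 - 4 * pm * p1 * z ^ 2 := by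
    refine Real.sq_sqrt (sub_nonneg.2 ?_)
    calc 4 * pm * p1 * z ^ 2 = (2 * |z| * σ) ^ 2 := by rw [mul_pow, mul_pow, sq_abs, hσ_sq]; ring
      _ ≤ (1 - p0 * z) ^ 2 := by gcongr
  have hS : 0 < 1 - p0 * z + Δ := by linarith [show 0 ≤ 2 * |z| * σ by positivity]
  -- The small root with its numerator rationalized, so that `z = 0` needs no separate treatment.
  obtain ⟨a, ha⟩ : ∃ a, a = 2 * pm * z / (1 - p0 * z + Δ) := ⟨_, rfl⟩
  have hconst : a * (1 - p0 * z + Δ) = 2 * pm * z := by rw [ha, div_mul_cancel₀ _ hS.ne']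
  have hlinear : 2 * (z * p1 * a) = 1 - p0 * z - Δ :=
    mul_right_cancel₀ hS.ne' (by linear_combination 2 * z * p1 * hconst + hΔ_sq)
  refine ⟨a, (1 - p0 * z + Δ) / 2, ?_, ?_, by linarith, fun x ↦ ?_⟩
  · have hτσ' : τ * σ = pm := mul_right_cancel₀ hp1.ne' (by linear_combination σ * hτσ + hσ_sq)
    rw [ha, abs_div, abs_of_pos hS, div_lt_iff₀ hS, abs_mul, abs_of_pos (by positivity)]
    calc 2 * pm * |z| = τ * (2 * |z| * σ) := by rw [← hτσ']; ring
      _ < τ * (1 - p0 * z + Δ) := mul_lt_mul_of_pos_left (by linarith) hτ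
  · rw [abs_mul, abs_of_pos hp1, abs_of_pos (half_pos hS), mul_assoc, hτσ]
    linarith
  · have hconstC : (a * (1 - p0 * z + Δ) : ℂ) = 2 * pm * z := mod_cast hconst
    have hlinearC : (2 * (z * p1 * a) : ℂ) = 1 - p0 * z - Δ := mod_cast hlinear
    push_cast
    linear_combination hconstC / 2 - x / 2 * hlinearC

theorem hasSum_bridgeW_mul_pow (hpm : 0 < pm) (hp1 : 0 < p1) {z : ℝ}
    (hz : |z| * (|p0| + 2 * √(pm * p1)) < 1) :
    HasSum (fun n ↦ bridgeW pm p0 p1 n * z ^ n)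
      (√((1 - p0 * z) ^ 2 - 4 * pm * p1 * z ^ 2))⁻¹ := by
  obtain ⟨a, c, ha, hc, hΔ, hfactor⟩ := exists_kernel_factorization hpm hp1 hz
  have hsum := hasSum_bridgeW_circleIntegral pm p0 p1 (z := z)
    (Real.sqrt_pos.2 (div_pos hpm hp1)) hz fun x hx ↦ by
      rw [norm_mul, norm_real, Real.norm_eq_abs]
      gcongr
      exact norm_stepLaurent_le hpm hp1 (mem_sphere_zero_iff_norm.1 hx)
  simp only [hfactor] at hsum
  rw [circleIntegral_inv_sub_mul_sub (by simpa using ha) (by simpa using hc),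
    inv_mul_cancel_left₀ two_pi_I_ne_zero] at hsum
  rw [← hΔ, ← hasSum_ofReal]
  exact_mod_cast hsum

end SaddleCircle

lemma bridgeW_zero (pm p0 p1 : ℝ) : bridgeW pm p0 p1 0 = 1 := by
  simp [bridgeW, psum, walkWeight]

lemma bridgeW_nonneg {pm p0 p1 : ℝ} (hpm : 0 ≤ pm) (hp0 : 0 ≤ p0) (hp1 : 0 ≤ p1) (n : ℕ) :
    0 ≤ bridgeW pm p0 p1 n := by
  refine Finset.sum_nonneg fun w _ ↦ Finset.prod_nonneg fun i _ ↦ ?_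
  unfold stepWeight
  split_ifs <;> assumption

lemma one_le_tsum_bridgeW_mul_pow {pm p0 p1 z : ℝ} (hpm : 0 ≤ pm) (hp0 : 0 ≤ p0) (hp1 : 0 ≤ p1)
    (hz : 0 ≤ z) (hsum : Summable fun n ↦ bridgeW pm p0 p1 n * z ^ n) :
    1 ≤ ∑' n, bridgeW pm p0 p1 n * z ^ n := by
  simpa [bridgeW_zero] using hsum.le_tsum 0 fun n _ ↦
    mul_nonneg (bridgeW_nonneg hpm hp0 hp1 n) (pow_nonneg hz n)

lemma analyticOnNhd_complex_sqrt : AnalyticOnNhd ℂ Complex.sqrt slitPlane :=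
  analyticOnNhd_id.cpow analyticOnNhd_const fun _ hz ↦ hz

lemma exists_analyticOnNhd_sqrt_mul_eq {α β : ℝ} (hβ : 0 < β) (hαβ : α < β) :
    ∃ U : Set ℂ, IsOpen U ∧ ((1 / β : ℝ) : ℂ) ∈ U ∧ ∃ b : ℂ → ℂ, AnalyticOnNhd ℂ b U ∧
      ∀ z : ℝ, (z : ℂ) ∈ U → (√((1 - α * z) * (1 - β * z)) : ℂ) = b z * √(1 - β * z) := by
  have hmem (z : ℝ) : (1 - α * z : ℂ) ∈ slitPlane ↔ 0 < 1 - α * z := by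
    rw [← ofReal_mem_slitPlane]
    push_cast
    rfl
  refine ⟨(fun z : ℂ ↦ 1 - α * z) ⁻¹' slitPlane, isOpen_slitPlane.preimage (by fun_prop), ?_,
    fun z ↦ Complex.sqrt (1 - α * z), ?_, fun z hz ↦ ?_⟩
  · rwa [mem_preimage, hmem, mul_one_div, sub_pos, div_lt_one hβ]
  · exact analyticOnNhd_complex_sqrt.comp (fun z _ ↦ by fun_prop) fun z hz ↦ hz
  · have hpos : 0 ≤ 1 - α * z := ((hmem z).1 hz).le
    have hsqrt : Complex.sqrt (1 - α * z) = √(1 - α * z) := by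
      simpa using Complex.sqrt_of_nonneg (a := (1 - α * z : ℝ)) (mod_cast hpos)
    beta_reduce
    rw [hsqrt, Real.sqrt_mul hpos, ofReal_mul]

/-- **Square-root decomposition of the generating function of arches**
`A(z) = 1 - 1/B(z) = a(z) + b(z)√(1-z/ρ)` near `ρ`. -/
theorem arch_gf_decomposition (pm p0 p1 : ℝ)
    (hpm : 0 < pm) (hp0 : 0 < p0) (hp1 : 0 < p1) :
    let ρ : ℝ := 1 / (p0 + 2 * Real.sqrt (pm * p1))
    let B : ℝ → ℝ := fun z => ∑' n : ℕ, bridgeW pm p0 p1 n * z ^ n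
    let A : ℝ → ℝ := fun z => 1 - 1 / B z
    (∀ z : ℝ, 0 ≤ z → z < ρ →
      Summable (fun n : ℕ => bridgeW pm p0 p1 n * z ^ n) ∧ 1 ≤ B z) ∧
    ∃ U : Set ℂ, IsOpen U ∧ (ρ : ℂ) ∈ U ∧
      ∃ a b : ℂ → ℂ, AnalyticOnNhd ℂ a U ∧ AnalyticOnNhd ℂ b U ∧
        ∀ z : ℝ, (z : ℂ) ∈ U → 0 < z → z < ρ →
          (A z : ℂ) = a z + b z * (Real.sqrt (1 - z / ρ) : ℂ) := by
  intro ρ B A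
  have hs : 0 < √(pm * p1) := Real.sqrt_pos.2 (mul_pos hpm hp1)
  have hβ : 0 < p0 + 2 * √(pm * p1) := by positivity
  have hsum {z : ℝ} (hz0 : 0 ≤ z) (hz : z < ρ) :=
    hasSum_bridgeW_mul_pow (p0 := p0) (z := z) hpm hp1 <| by
      rw [abs_of_nonneg hz0, abs_of_pos hp0]
      exact (lt_div_iff₀ hβ).1 hz
  refine ⟨fun z hz0 hz ↦ ⟨(hsum hz0 hz).summable,
    one_le_tsum_bridgeW_mul_pow hpm.le hp0.le hp1.le hz0 (hsum hz0 hz).summable⟩, ?_⟩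
  obtain ⟨U, hU, hρU, b, hb, hroot⟩ := exists_analyticOnNhd_sqrt_mul_eq hβ
    (show p0 - 2 * √(pm * p1) < p0 + 2 * √(pm * p1) by linarith)
  refine ⟨U, hU, hρU, fun _ ↦ 1, fun z ↦ -b z, analyticOnNhd_const, hb.neg, fun z hzU hz0 hz ↦ ?_⟩
  have hdiscr : (1 - p0 * z) ^ 2 - 4 * pm * p1 * z ^ 2 =
      (1 - (p0 - 2 * √(pm * p1)) * z) * (1 - (p0 + 2 * √(pm * p1)) * z) := by
    linear_combination 4 * z ^ 2 * Real.sq_sqrt (mul_pos hpm hp1).le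
  have hA : A z = 1 - √((1 - p0 * z) ^ 2 - 4 * pm * p1 * z ^ 2) := by
    simp only [A, B, (hsum hz0.le hz).tsum_eq, one_div, inv_inv]
  have hρ : 1 - z / ρ = 1 - (p0 + 2 * √(pm * p1)) * z := by
    simp only [ρ, div_div_eq_mul_div, div_one, mul_comm]
  rw [hA, hdiscr, hρ, ofReal_sub, ofReal_one, hroot z hzU, neg_mul, sub_eq_add_neg]
end

section
/- Fix positive reals p₋₁, p₀, p₁ with p₁ ≠ p₋₁, and let P(1) = p₋₁ + p₀ + p₁. Let w_{n,k} denote the total weight of Motzkin walks of length n having exactly k returns to zero, and let X_n be defined by P[X_n = k] = w_{n,k}/P(1)ⁿ. Then X_n converges in distribution to a geometric distribution: for every fixed k ∈ ℕ, lim_{n→∞} w_{n,k}/P(1)ⁿ = (1−λ)^k · λ, where λ = |p₁ − p₋₁|/P(1). -/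
open scoped BigOperators Classical

/-!
Two facts about an arbitrary Motzkin walk give the limit law.

*No return.* By the ballot theorem, a walk of length `n` ending at `b` has no return to zero with
conditional probability `|b| / n`. Hence `P[X_n = 0] = E|ω_n| / n`, which tends to `λ = |δ| / P(1)`
because the variance of `ω_n` is linear in `n`.

*Renewal.* Cutting a walk at its first return gives `P[X_n = k + 1] = ∑ f_i P[X_{n - i} = k]`, where
`f_i` is the probability that the first return happens at time `i`. By the first fact
`∑ f_i = 1 - λ`, so every further return multiplies the limit by `1 - λ`.
-/

section ReturnsToZero

open Filter Topology
open Finset.HasAntidiagonal (antidiagonal)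

lemma tendsto_sum_antidiagonal_mul {R : Type*} [NormedRing R] [CompleteSpace R] {f u : ℕ → R}
    {l : R} (hf : Summable fun i ↦ ‖f i‖) (hu : Tendsto u atTop (𝓝 l)) :
    Tendsto (fun n ↦ ∑ ij ∈ antidiagonal n, f ij.1 * u ij.2) atTop (𝓝 ((∑' i, f i) * l)) := by
  obtain ⟨C, hC⟩ := (Metric.isBounded_range_of_tendsto u hu).exists_norm_le
  have hlim (i : ℕ) : Tendsto (fun n ↦ if i ≤ n then f i * u (n - i) else 0) atTop
      (𝓝 (f i * l)) := by
    refine ((hu.comp (tendsto_sub_atTop_nat i)).const_mul (f i)).congr' ?_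
    filter_upwards [eventually_ge_atTop i] with n hn
    simp [hn]
  have hbound (n i : ℕ) : ‖if i ≤ n then f i * u (n - i) else 0‖ ≤ ‖f i‖ * C := by
    have hu_le := hC (u (n - i)) ⟨_, rfl⟩
    split_ifs
    · exact (norm_mul_le _ _).trans (by gcongr)
    · simpa using mul_nonneg (norm_nonneg (f i)) ((norm_nonneg _).trans hu_le)
  have htsum := tendsto_tsum_of_dominated_convergence (hf.mul_right C) hlim
    (.of_forall hbound)
  rw [hf.of_norm.tsum_mul_right] at htsum
  refine htsum.congr fun n ↦ ?_
  rw [tsum_eq_sum (s := Finset.range (n + 1)) fun i hi ↦ if_neg (by simpa using hi),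
    Finset.Nat.sum_antidiagonal_eq_sum_range_succ fun i j ↦ f i * u j]
  exact Finset.sum_congr rfl fun i hi ↦ if_pos (Finset.mem_range_succ_iff.1 hi)

variable {n : ℕ}

lemma sum_univ_fin_snoc {α M : Type*} [Fintype α] [AddCommMonoid M] (F : (Fin (n + 1) → α) → M) :
    ∑ w, F w = ∑ w : Fin n → α, ∑ s, F (Fin.snoc w s) := by
  rw [← (Fin.snocEquiv fun _ ↦ α).sum_comp, Fintype.sum_prod_type_right]
  rfl

lemma psum_snoc_of_le (w : Fin n → Fin 3) (s : Fin 3) {j : ℕ} (hj : j ≤ n) :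
    psum (Fin.snoc w s : Fin (n + 1) → Fin 3) j = psum w j := by
  simp [psum, Finset.sum_filter, Fin.sum_univ_castSucc, hj]

lemma psum_snoc_succ (w : Fin n → Fin 3) (s : Fin 3) :
    psum (Fin.snoc w s : Fin (n + 1) → Fin 3) (n + 1) = psum w n + stepVal s := by
  simp [psum, Finset.sum_filter, Fin.sum_univ_castSucc]

lemma retZero_snoc (w : Fin n → Fin 3) (s : Fin 3) :
    retZero (Fin.snoc w s : Fin (n + 1) → Fin 3) =
      retZero w + if psum w n + stepVal s = 0 then 1 else 0 := by
  simp only [retZero, Finset.card_filter]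
  rw [Finset.sum_Icc_succ_top (by simp), psum_snoc_succ]
  congr 1
  refine Finset.sum_congr rfl fun j hj ↦ ?_
  rw [psum_snoc_of_le w s (Finset.mem_Icc.1 hj).2]

/-- The transfer operator of one step: the weighted sum of `g` over the three positions that a walk
at `y` can reach next. The weights may have any sign; with the weights `-p₋₁, 0, p₁` each step is
additionally weighted by its own value. -/
def stepOp (pm p0 p1 : ℝ) (g : ℤ → ℝ) (y : ℤ) : ℝ :=
  pm * g (y - 1) + p0 * g y + p1 * g (y + 1)

variable {pm p0 p1 : ℝ}

lemma stepOp_add (g h : ℤ → ℝ) :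
    stepOp pm p0 p1 (g + h) = stepOp pm p0 p1 g + stepOp pm p0 p1 h := by
  ext y
  simp only [stepOp, Pi.add_apply]
  ring

lemma stepOp_smul (c : ℝ) (g : ℤ → ℝ) : stepOp pm p0 p1 (c • g) = c • stepOp pm p0 p1 g := by
  ext y
  simp only [stepOp, Pi.smul_apply, smul_eq_mul]
  ring

lemma stepOp_one : stepOp pm p0 p1 1 = (pm + p0 + p1) • 1 := by
  ext y
  simp [stepOp]

lemma stepOp_comm {qm q0 q1 : ℝ} (g : ℤ → ℝ) :
    stepOp pm p0 p1 (stepOp qm q0 q1 g) = stepOp qm q0 q1 (stepOp pm p0 p1 g) := by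
  ext y
  simp only [stepOp, sub_add_cancel, add_sub_cancel_right]
  ring

lemma stepOp_id_mul (g : ℤ → ℝ) :
    stepOp pm p0 p1 (fun y ↦ y * g y) =
      (fun y ↦ y * stepOp pm p0 p1 g y) + stepOp (-pm) 0 p1 g := by
  ext y
  simp only [stepOp, Pi.add_apply]
  push_cast
  ring

lemma walkWeight_nonneg (hpm : 0 ≤ pm) (hp0 : 0 ≤ p0) (hp1 : 0 ≤ p1) (w : Fin n → Fin 3) :
    0 ≤ walkWeight pm p0 p1 w :=
  Finset.prod_nonneg fun i _ ↦ by unfold stepWeight; split_ifs <;> assumption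

lemma walkWeight_snoc (w : Fin n → Fin 3) (s : Fin 3) :
    walkWeight pm p0 p1 (Fin.snoc w s : Fin (n + 1) → Fin 3) =
      walkWeight pm p0 p1 w * stepWeight pm p0 p1 s := by
  simp [walkWeight, Fin.prod_univ_castSucc]

lemma sum_stepWeight_mul (g : ℤ → ℝ) (y : ℤ) :
    ∑ s, stepWeight pm p0 p1 s * g (y + stepVal s) = stepOp pm p0 p1 g y := by
  simp [Fin.sum_univ_three, stepWeight, stepVal, stepOp, sub_eq_add_neg]

/-- The sum of `g (ω_n)` over all walks of length `n`, with their weights. -/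
noncomputable def endpointSum (pm p0 p1 : ℝ) (n : ℕ) (g : ℤ → ℝ) : ℝ :=
  ∑ w : Fin n → Fin 3, walkWeight pm p0 p1 w * g (psum w n)

lemma endpointSum_zero (g : ℤ → ℝ) : endpointSum pm p0 p1 0 g = g 0 := by
  simp [endpointSum, walkWeight, psum]

lemma endpointSum_succ (n : ℕ) (g : ℤ → ℝ) :
    endpointSum pm p0 p1 (n + 1) g = endpointSum pm p0 p1 n (stepOp pm p0 p1 g) := by
  simp only [endpointSum, sum_univ_fin_snoc, walkWeight_snoc, psum_snoc_succ, mul_assoc,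
    ← Finset.mul_sum, sum_stepWeight_mul]

lemma endpointSum_add (n : ℕ) (g h : ℤ → ℝ) :
    endpointSum pm p0 p1 n (g + h) = endpointSum pm p0 p1 n g + endpointSum pm p0 p1 n h := by
  simp only [endpointSum, Pi.add_apply, mul_add, Finset.sum_add_distrib]

lemma endpointSum_smul (n : ℕ) (c : ℝ) (g : ℤ → ℝ) :
    endpointSum pm p0 p1 n (c • g) = c * endpointSum pm p0 p1 n g := by
  simp only [endpointSum, Pi.smul_apply, smul_eq_mul, Finset.mul_sum, mul_left_comm]

lemma endpointSum_one (n : ℕ) : endpointSum pm p0 p1 n 1 = (pm + p0 + p1) ^ n := by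
  induction n with
  | zero => simp [endpointSum_zero]
  | succ n ih => rw [endpointSum_succ, stepOp_one, endpointSum_smul, ih, pow_succ']

-- The steps are exchangeable, so each of them contributes as much to `ω_{n+1}` as the last one.
lemma endpointSum_succ_id_mul (n : ℕ) (g : ℤ → ℝ) :
    endpointSum pm p0 p1 (n + 1) (fun y ↦ y * g y) =
      (n + 1) * endpointSum pm p0 p1 n (stepOp (-pm) 0 p1 g) := by
  induction n generalizing g with
  | zero => simp [endpointSum_succ, endpointSum_zero, stepOp]
  | succ n ih =>
    rw [endpointSum_succ, stepOp_id_mul, endpointSum_add, ih, stepOp_comm, ← endpointSum_succ]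
    push_cast
    ring

lemma sq_endpointSum_le (hpm : 0 ≤ pm) (hp0 : 0 ≤ p0) (hp1 : 0 ≤ p1) (n : ℕ) (g : ℤ → ℝ) :
    endpointSum pm p0 p1 n g ^ 2 ≤ (pm + p0 + p1) ^ n * endpointSum pm p0 p1 n (g ^ 2) := by
  have hw (w : Fin n → Fin 3) := walkWeight_nonneg hpm hp0 hp1 w
  rw [← endpointSum_one]
  refine Finset.sum_sq_le_sum_mul_sum_of_sq_le_mul _ (fun w _ ↦ ?_) (fun w _ ↦ ?_) (fun w _ ↦ ?_)
  · simpa using hw w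
  · exact mul_nonneg (hw w) (sq_nonneg _)
  · simp only [Pi.one_apply, Pi.pow_apply]
    exact (by ring : _ = _).le

lemma endpointSum_mono (hpm : 0 ≤ pm) (hp0 : 0 ≤ p0) (hp1 : 0 ≤ p1) (n : ℕ) {g h : ℤ → ℝ}
    (hgh : g ≤ h) : endpointSum pm p0 p1 n g ≤ endpointSum pm p0 p1 n h :=
  Finset.sum_le_sum fun w _ ↦
    mul_le_mul_of_nonneg_left (hgh _) (walkWeight_nonneg hpm hp0 hp1 w)

-- Multiplying by `P(1)` keeps the mean `n δ / P(1)` of `ω_n` free of divisions.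
lemma endpointSum_sq_sub_mean (n : ℕ) :
    endpointSum pm p0 p1 n (fun y ↦ ((pm + p0 + p1) * y - n * (p1 - pm)) ^ 2) =
      n * ((pm + p0 + p1) * (pm + p1) - (p1 - pm) ^ 2) * (pm + p0 + p1) ^ n := by
  induction n with
  | zero => simp [endpointSum_zero]
  | succ n ih =>
    have hstep : stepOp pm p0 p1
          (fun y ↦ ((pm + p0 + p1) * y - (n + 1 : ℕ) * (p1 - pm)) ^ 2) =
        (pm + p0 + p1) • (fun y : ℤ ↦ ((pm + p0 + p1) * y - n * (p1 - pm)) ^ 2) +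
          ((pm + p0 + p1) * ((pm + p0 + p1) * (pm + p1) - (p1 - pm) ^ 2)) • 1 := by
      ext y
      simp only [stepOp, Pi.add_apply, Pi.smul_apply, Pi.one_apply, smul_eq_mul]
      push_cast
      ring
    rw [endpointSum_succ, hstep, endpointSum_add, endpointSum_smul, endpointSum_smul, ih,
      endpointSum_one]
    push_cast
    ring

/-- The sum of `g (ω_n)` over the walks of length `n` with exactly `k` returns to zero, with their
weights. The test function `g` makes a recursion on the last step possible. -/
noncomputable def returnSum (pm p0 p1 : ℝ) (n k : ℕ) (g : ℤ → ℝ) : ℝ :=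
  ∑ w : Fin n → Fin 3 with retZero w = k, walkWeight pm p0 p1 w * g (psum w n)

lemma walkRetW_eq_returnSum (n k : ℕ) : walkRetW pm p0 p1 n k = returnSum pm p0 p1 n k 1 := by
  simp [walkRetW, returnSum]

lemma returnSum_zero_zero (g : ℤ → ℝ) : returnSum pm p0 p1 0 0 g = g 0 := by
  simp [returnSum, retZero, walkWeight, psum]

lemma returnSum_zero_succ (k : ℕ) (g : ℤ → ℝ) : returnSum pm p0 p1 0 (k + 1) g = 0 := by
  simp [returnSum, retZero]

lemma returnSum_add (n k : ℕ) (g h : ℤ → ℝ) :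
    returnSum pm p0 p1 n k (g + h) = returnSum pm p0 p1 n k g + returnSum pm p0 p1 n k h := by
  simp only [returnSum, Pi.add_apply, mul_add, Finset.sum_add_distrib]

lemma returnSum_smul (n k : ℕ) (c : ℝ) (g : ℤ → ℝ) :
    returnSum pm p0 p1 n k (c • g) = c * returnSum pm p0 p1 n k g := by
  simp only [returnSum, Pi.smul_apply, smul_eq_mul, Finset.mul_sum, mul_left_comm]

lemma returnSum_nonneg (hpm : 0 ≤ pm) (hp0 : 0 ≤ p0) (hp1 : 0 ≤ p1) (n k : ℕ) {g : ℤ → ℝ}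
    (hg : 0 ≤ g) : 0 ≤ returnSum pm p0 p1 n k g :=
  Finset.sum_nonneg fun w _ ↦ mul_nonneg (walkWeight_nonneg hpm hp0 hp1 w) (hg _)

lemma returnSum_succ (n k : ℕ) (g : ℤ → ℝ) :
    returnSum pm p0 p1 (n + 1) k g = ∑ w : Fin n → Fin 3, ∑ s,
      if retZero w + (if psum w n + stepVal s = 0 then 1 else 0) = k then
        walkWeight pm p0 p1 w * (stepWeight pm p0 p1 s * g (psum w n + stepVal s)) else 0 := by
  simp only [returnSum, Finset.sum_filter, sum_univ_fin_snoc, retZero_snoc, walkWeight_snoc,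
    psum_snoc_succ, mul_assoc]

lemma returnSum_stepOp (n k : ℕ) (g : ℤ → ℝ) :
    returnSum pm p0 p1 n k (stepOp pm p0 p1 g) = ∑ w : Fin n → Fin 3, ∑ s,
      if retZero w = k then
        walkWeight pm p0 p1 w * (stepWeight pm p0 p1 s * g (psum w n + stepVal s)) else 0 := by
  simp only [returnSum, Finset.sum_filter, ← sum_stepWeight_mul, Finset.mul_sum,
    Finset.ite_sum_zero]

lemma returnSum_succ_zero (n : ℕ) (g : ℤ → ℝ) :
    returnSum pm p0 p1 (n + 1) 0 g =
      returnSum pm p0 p1 n 0 (stepOp pm p0 p1 (Set.indicator {0}ᶜ g)) := by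
  rw [returnSum_succ, returnSum_stepOp]
  refine Finset.sum_congr rfl fun w _ ↦ Finset.sum_congr rfl fun s _ ↦ ?_
  by_cases h : psum w n + stepVal s = 0 <;> simp [h]

lemma returnSum_succ_succ (n k : ℕ) (g : ℤ → ℝ) :
    returnSum pm p0 p1 (n + 1) (k + 1) g =
      returnSum pm p0 p1 n (k + 1) (stepOp pm p0 p1 (Set.indicator {0}ᶜ g)) +
        returnSum pm p0 p1 n k (stepOp pm p0 p1 (Set.indicator {0} g)) := by
  simp only [returnSum_succ, returnSum_stepOp, ← Finset.sum_add_distrib]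
  refine Finset.sum_congr rfl fun w _ ↦ Finset.sum_congr rfl fun s _ ↦ ?_
  by_cases h : psum w n + stepVal s = 0 <;> simp [h]

/-- Total weight of the walks of length `n` that return to zero for the first time at time `n`. -/
noncomputable def firstReturnW (pm p0 p1 : ℝ) (n : ℕ) : ℝ :=
  returnSum pm p0 p1 n 1 (Set.indicator {0} 1)

lemma firstReturnW_zero : firstReturnW pm p0 p1 0 = 0 := returnSum_zero_succ 0 _

lemma firstReturnW_succ (n : ℕ) :
    firstReturnW pm p0 p1 (n + 1) =
      returnSum pm p0 p1 n 0 (stepOp pm p0 p1 (Set.indicator {0} 1)) := by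
  have hoff : returnSum pm p0 p1 n 1
      (stepOp pm p0 p1 (Set.indicator {0}ᶜ (Set.indicator {0} 1))) = 0 := by
    rw [Set.indicator_indicator, Set.compl_inter_self, Set.indicator_empty']
    simp [returnSum, stepOp]
  rw [firstReturnW, returnSum_succ_succ, hoff, zero_add, Set.indicator_indicator, Set.inter_self]

lemma firstReturnW_succ_add_walkRetW_zero (n : ℕ) :
    firstReturnW pm p0 p1 (n + 1) + walkRetW pm p0 p1 (n + 1) 0 =
      (pm + p0 + p1) * walkRetW pm p0 p1 n 0 := by
  rw [firstReturnW_succ, walkRetW_eq_returnSum, returnSum_succ_zero, ← returnSum_add, ← stepOp_add,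
    Set.indicator_self_add_compl, stepOp_one, returnSum_smul, walkRetW_eq_returnSum]

lemma returnSum_succ_eq_sum_antidiagonal (n k : ℕ) (g : ℤ → ℝ) :
    returnSum pm p0 p1 n (k + 1) g =
      ∑ ij ∈ antidiagonal n, firstReturnW pm p0 p1 ij.1 * returnSum pm p0 p1 ij.2 k g := by
  induction n generalizing k g with
  | zero => simp [returnSum_zero_succ, firstReturnW_zero]
  | succ n ih =>
    rw [Finset.Nat.sum_antidiagonal_succ', returnSum_succ_succ]
    cases k with
    | zero =>
      have hat : (Set.indicator {0} g : ℤ → ℝ) = g 0 • Set.indicator {0} 1 := by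
        ext y
        by_cases hy : y = 0 <;> simp [hy]
      simp only [returnSum_succ_zero, ← ih, returnSum_zero_zero, hat, stepOp_smul, returnSum_smul,
        ← firstReturnW_succ]
      ring
    | succ k =>
      simp only [returnSum_zero_succ, returnSum_succ_succ, mul_add, Finset.sum_add_distrib, ← ih]
      ring

-- A step has size at most one, so it changes the sign only by way of zero:
-- `|y| = y * sign (y + s)` unless `y + s = 0`.
lemma abs_mul_stepOp_indicator_compl (g : ℤ → ℝ) :
    (fun y : ℤ ↦ |(y : ℝ)| * stepOp pm p0 p1 (Set.indicator {0}ᶜ g) y) =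
      fun y : ℤ ↦ y * stepOp pm p0 p1 (fun z ↦ z.sign * g z) y := by
  have hsign (y z : ℤ) (h : |z - y| ≤ 1) :
      |(y : ℝ)| * Set.indicator {0}ᶜ g z = y * (z.sign * g z) := by
    rcases lt_trichotomy z 0 with hz | rfl | hz
    · have hy : y ≤ 0 := by grind
      simp [hz.ne, Int.sign_eq_neg_one_of_neg hz, abs_of_nonpos (Int.cast_nonpos (R := ℝ).2 hy)]
    · simp
    · have hy : 0 ≤ y := by grind
      simp [hz.ne', Int.sign_eq_one_of_pos hz, abs_of_nonneg (Int.cast_nonneg (R := ℝ) hy)]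
  ext y
  simp only [stepOp, mul_add, mul_left_comm _ pm, mul_left_comm _ p0, mul_left_comm _ p1]
  rw [hsign y (y - 1) (by simp), hsign y y (by simp), hsign y (y + 1) (by simp)]

lemma mul_returnSum_zero_eq_endpointSum (n : ℕ) (g : ℤ → ℝ) :
    n * returnSum pm p0 p1 n 0 g = endpointSum pm p0 p1 n (fun y ↦ |(y : ℝ)| * g y) := by
  induction n generalizing g with
  | zero => simp [endpointSum_zero]
  | succ n ih =>
    have habs : (fun y : ℤ ↦ |(y : ℝ)| * g y) = fun y : ℤ ↦ (y : ℝ) * (y.sign * g y) := by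
      ext y
      rw [← mul_assoc, ← Int.cast_abs, ← Int.cast_mul, Int.mul_sign_self, Int.natCast_natAbs]
    have hlast := endpointSum_succ_id_mul (pm := pm) (p0 := p0) (p1 := p1) n
      fun y ↦ y.sign * g y
    have hsplit : endpointSum pm p0 p1 (n + 1) (fun y ↦ y * (y.sign * g y)) =
        n * returnSum pm p0 p1 (n + 1) 0 g +
          endpointSum pm p0 p1 n (stepOp (-pm) 0 p1 fun y ↦ y.sign * g y) := by
      rw [endpointSum_succ, stepOp_id_mul, endpointSum_add, ← abs_mul_stepOp_indicator_compl, ← ih,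
        returnSum_succ_zero]
    rw [habs]
    rcases eq_or_ne n 0 with rfl | hn
    · simp [returnSum_succ_zero, returnSum_zero_zero, endpointSum_succ, endpointSum_zero, stepOp]
    · refine mul_left_cancel₀ (Nat.cast_ne_zero (R := ℝ).2 hn) ?_
      push_cast
      linear_combination (-(n + 1 : ℝ)) * hsplit + hlast

lemma mul_walkRetW_zero (n : ℕ) :
    n * walkRetW pm p0 p1 n 0 = endpointSum pm p0 p1 n (fun y ↦ |(y : ℝ)|) := by
  simpa [walkRetW_eq_returnSum] using mul_returnSum_zero_eq_endpointSum n 1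

lemma sq_endpointSum_abs_sub_le (hpm : 0 ≤ pm) (hp0 : 0 ≤ p0) (hp1 : 0 ≤ p1) (n : ℕ) :
    ((pm + p0 + p1) * endpointSum pm p0 p1 n (fun y ↦ |(y : ℝ)|) -
        n * |p1 - pm| * (pm + p0 + p1) ^ n) ^ 2 ≤
      n * ((pm + p0 + p1) * (pm + p1) - (p1 - pm) ^ 2) * ((pm + p0 + p1) ^ n) ^ 2 := by
  have hP : 0 ≤ pm + p0 + p1 := by positivity
  set P := pm + p0 + p1
  let g : ℤ → ℝ := P • (fun y : ℤ ↦ |(y : ℝ)|) + (-(n * |p1 - pm|)) • 1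
  have hg : g ^ 2 ≤ fun y : ℤ ↦ (P * y - n * (p1 - pm)) ^ 2 := fun y ↦ by
    refine sq_le_sq.2 ((le_of_eq ?_).trans (abs_abs_sub_abs_le _ _))
    simp [g, abs_mul, abs_of_nonneg hP, sub_eq_add_neg]
  calc _ = endpointSum pm p0 p1 n g ^ 2 := by
        rw [endpointSum_add, endpointSum_smul, endpointSum_smul, endpointSum_one]
        ring
    _ ≤ P ^ n * endpointSum pm p0 p1 n (g ^ 2) := sq_endpointSum_le hpm hp0 hp1 n g
    _ ≤ P ^ n * endpointSum pm p0 p1 n (fun y ↦ (P * y - n * (p1 - pm)) ^ 2) := by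
        gcongr
        exact endpointSum_mono hpm hp0 hp1 n hg
    _ = _ := by rw [endpointSum_sq_sub_mean]; ring

lemma sq_walkRetW_zero_div_sub_le (hpm : 0 ≤ pm) (hp0 : 0 ≤ p0) (hp1 : 0 ≤ p1)
    (hP : 0 < pm + p0 + p1) (hn : n ≠ 0) :
    (walkRetW pm p0 p1 n 0 / (pm + p0 + p1) ^ n - |p1 - pm| / (pm + p0 + p1)) ^ 2 ≤
      ((pm + p1) / (pm + p0 + p1) - ((p1 - pm) / (pm + p0 + p1)) ^ 2) / n := by
  have h := sq_endpointSum_abs_sub_le hpm hp0 hp1 n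
  rw [← mul_walkRetW_zero] at h
  set P := pm + p0 + p1
  have hscale : 0 < (n * P * P ^ n) ^ 2 := by positivity
  refine le_of_mul_le_mul_right ?_ hscale
  calc _ = (P * (n * walkRetW pm p0 p1 n 0) - n * |p1 - pm| * P ^ n) ^ 2 := by
        rw [← mul_pow]
        field_simp
    _ ≤ _ := h
    _ = _ := by field_simp

lemma tendsto_walkRetW_zero_div (hpm : 0 ≤ pm) (hp0 : 0 ≤ p0) (hp1 : 0 ≤ p1)
    (hP : 0 < pm + p0 + p1) :
    Tendsto (fun n ↦ walkRetW pm p0 p1 n 0 / (pm + p0 + p1) ^ n) atTop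
      (𝓝 (|p1 - pm| / (pm + p0 + p1))) := by
  suffices h : Tendsto (fun n ↦ (walkRetW pm p0 p1 n 0 / (pm + p0 + p1) ^ n -
      |p1 - pm| / (pm + p0 + p1)) ^ 2) atTop (𝓝 0) by
    rw [← tendsto_sub_nhds_zero_iff, tendsto_zero_iff_abs_tendsto_zero]
    simpa [Function.comp_def, Real.sqrt_sq_eq_abs] using h.sqrt
  refine squeeze_zero' (.of_forall fun n ↦ sq_nonneg _) ?_ (tendsto_const_div_atTop_nhds_zero_nat
    ((pm + p1) / (pm + p0 + p1) - ((p1 - pm) / (pm + p0 + p1)) ^ 2))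
  filter_upwards [eventually_ne_atTop 0] with n hn
  exact sq_walkRetW_zero_div_sub_le hpm hp0 hp1 hP hn

lemma sum_range_firstReturnW_div (hP : pm + p0 + p1 ≠ 0) (n : ℕ) :
    ∑ i ∈ Finset.range (n + 1), firstReturnW pm p0 p1 i / (pm + p0 + p1) ^ i =
      1 - walkRetW pm p0 p1 n 0 / (pm + p0 + p1) ^ n := by
  induction n with
  | zero => simp [firstReturnW_zero, walkRetW_eq_returnSum, returnSum_zero_zero]
  | succ n ih =>
    rw [Finset.sum_range_succ, ih, eq_sub_of_add_eq (firstReturnW_succ_add_walkRetW_zero n)]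
    field_simp
    ring

lemma hasSum_firstReturnW_div (hpm : 0 ≤ pm) (hp0 : 0 ≤ p0) (hp1 : 0 ≤ p1)
    (hP : 0 < pm + p0 + p1) :
    HasSum (fun n ↦ firstReturnW pm p0 p1 n / (pm + p0 + p1) ^ n)
      (1 - |p1 - pm| / (pm + p0 + p1)) := by
  have hnonneg (n : ℕ) : 0 ≤ firstReturnW pm p0 p1 n :=
    returnSum_nonneg hpm hp0 hp1 n 1 (Set.indicator_nonneg fun _ _ ↦ zero_le_one)
  rw [hasSum_iff_tendsto_nat_of_nonneg fun n ↦ div_nonneg (hnonneg n) (by positivity),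
    ← tendsto_add_atTop_iff_nat 1]
  simpa only [sum_range_firstReturnW_div hP.ne'] using
    (tendsto_walkRetW_zero_div hpm hp0 hp1 hP).const_sub 1

lemma walkRetW_succ_div_eq_sum_antidiagonal (n k : ℕ) :
    walkRetW pm p0 p1 n (k + 1) / (pm + p0 + p1) ^ n =
      ∑ ij ∈ antidiagonal n, firstReturnW pm p0 p1 ij.1 / (pm + p0 + p1) ^ ij.1 *
        (walkRetW pm p0 p1 ij.2 k / (pm + p0 + p1) ^ ij.2) := by
  rw [walkRetW_eq_returnSum, returnSum_succ_eq_sum_antidiagonal, Finset.sum_div]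
  refine Finset.sum_congr rfl fun ij hij ↦ ?_
  rw [div_mul_div_comm, ← pow_add, Finset.HasAntidiagonal.mem_antidiagonal.1 hij,
    walkRetW_eq_returnSum]

theorem returns_to_zero_geometric_general {pm p0 p1 : ℝ} (hpm : 0 ≤ pm) (hp0 : 0 ≤ p0)
    (hp1 : 0 ≤ p1) (hP : 0 < pm + p0 + p1) (k : ℕ) :
    Tendsto (fun n ↦ walkRetW pm p0 p1 n k / (pm + p0 + p1) ^ n) atTop
      (𝓝 ((1 - |p1 - pm| / (pm + p0 + p1)) ^ k * (|p1 - pm| / (pm + p0 + p1)))) := by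
  induction k with
  | zero => simpa using tendsto_walkRetW_zero_div hpm hp0 hp1 hP
  | succ k ih =>
    have hfirst := hasSum_firstReturnW_div hpm hp0 hp1 hP
    have hconv := tendsto_sum_antidiagonal_mul hfirst.summable.norm ih
    simpa only [walkRetW_succ_div_eq_sum_antidiagonal, hfirst.tsum_eq, pow_succ', mul_assoc]
      using hconv

end ReturnsToZero

/-- **Limit law for returns to zero, nonzero drift**: `X_n` converges in distribution
to `Geom(|p₁-p₋₁|/P(1))`. -/
theorem returns_to_zero_geometric (pm p0 p1 : ℝ)
    (hpm : 0 < pm) (hp0 : 0 < p0) (hp1 : 0 < p1) (hdrift : p1 ≠ pm) :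
    let P1 : ℝ := pm + p0 + p1
    let lam : ℝ := |p1 - pm| / P1
    ∀ k : ℕ,
      Filter.Tendsto (fun n : ℕ => walkRetW pm p0 p1 n k / P1 ^ n)
        Filter.atTop (nhds ((1 - lam) ^ k * lam)) := by
  intro P1 _ k
  exact returns_to_zero_geometric_general hpm.le hp0.le hp1.le (by positivity) k
end

section
/- Fix positive reals p₋₁, p₀, p₁ with p₁ = p₋₁ (zero drift), and let P(1) = p₋₁ + p₀ + p₁ and P″(1) = 2p₋₁. Let w_{n,k} denote the total weight of Motzkin walks of length n having exactly k returns to zero. Then, with σ = √(P(1)/P″(1)), the number of returns to zero rescaled by √n converges in distribution to the half-normal law H(σ): for every real x ≥ 0, lim_{n→∞} (Σ_{k ≤ x√n} w_{n,k})/P(1)ⁿ = ∫_0^x √(2/(πσ²)) · exp(−t²/(2σ²)) dt. -/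
open scoped BigOperators Classical

/-! Let the total weight be `1`. The absolute value of a symmetric Motzkin walk makes a folded step
(`0` or `+1` with probabilities `q` and `2p`) when it is at zero and an ordinary step elsewhere.
Give it `k` folded and `n - k` ordinary steps to use in this way, and when one kind runs out let it
use the other. If the ordinary steps run out away from zero, it ends positive, and the walk can no
longer reach its `k`-th return. If the folded steps run out, then the final position is positive
when zero is not visited again, and otherwise its sign has mean zero by symmetry. So the
probability of fewer than `k` returns is the mean of the sign of the final position. The order in
which independent steps are used, as long as it depends only on the past, does not affect the law
of their sum, hence this final position is distributed as the sum `S` of `k` folded and `n - k`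
ordinary steps. If `k` is asymptotic to `x√n`, then `S / (2p√n)` converges in law to `N(x, σ²)`, by
the explicit characteristic functions, and the mean of the sign of `N(x, σ²)` is the probability
that `|N(0, σ²)| ≤ x`. -/

section Visits

lemma psum_zero {n : ℕ} (w : Fin n → Fin 3) : psum w 0 = 0 := by
  simp [psum]

lemma psum_cons_succ {n : ℕ} (s : Fin 3) (w : Fin n → Fin 3) (j : ℕ) :
    psum (Fin.cons s w : Fin (n + 1) → Fin 3) (j + 1) = stepVal s + psum w j := by
  simp [psum, Finset.sum_filter, Fin.sum_univ_succ]

/-- Number of times `0 ≤ j ≤ n` at which the walk `w`, started at height `h`, is at zero. In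
contrast to `retZero` the starting time is counted. -/
def visits {n : ℕ} (h : ℤ) (w : Fin n → Fin 3) : ℕ :=
  ((Finset.range (n + 1)).filter (fun j => h + psum w j = 0)).card

lemma visits_cons {n : ℕ} (h : ℤ) (s : Fin 3) (w : Fin n → Fin 3) :
    visits h (Fin.cons s w : Fin (n + 1) → Fin 3) =
      visits (h + stepVal s) w + if h = 0 then 1 else 0 := by
  simp only [visits, Finset.card_filter]
  rw [Finset.sum_range_succ']
  simp [psum_cons_succ, psum_zero, add_assoc]

lemma visits_zero_eq_retZero_add_one {n : ℕ} (w : Fin n → Fin 3) :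
    visits 0 w = retZero w + 1 := by
  simp only [visits, retZero, Finset.card_filter]
  rw [Finset.sum_range_succ', Finset.range_eq_Ico,
    Finset.sum_Ico_add' (fun j => if 0 + psum w j = 0 then 1 else 0) 0 n 1]
  simp only [psum_zero, zero_add, if_true]
  rfl

lemma visits_le_of_ne_zero {n : ℕ} {h : ℤ} (hh : h ≠ 0) (w : Fin n → Fin 3) :
    visits h w ≤ n := by
  have h_sub : (Finset.range (n + 1)).filter (fun j => h + psum w j = 0) ⊆ Finset.Icc 1 n := by
    intro j hj
    obtain ⟨hjn, hj0⟩ := Finset.mem_filter.1 hj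
    have : j ≠ 0 := by
      rintro rfl
      exact hh (by simpa [psum_zero] using hj0)
    simp only [Finset.mem_range] at hjn
    exact Finset.mem_Icc.2 ⟨by omega, by omega⟩
  simpa [visits] using Finset.card_le_card h_sub

variable (pm p0 p1 : ℝ)

lemma sum_walkWeight_filter_cons (n : ℕ) (P : (Fin (n + 1) → Fin 3) → Prop)
    [DecidablePred P] :
    ∑ w with P w, walkWeight pm p0 p1 w =
      pm * ∑ w with P (Fin.cons 0 w), walkWeight pm p0 p1 w +
      p0 * ∑ w with P (Fin.cons 1 w), walkWeight pm p0 p1 w +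
      p1 * ∑ w with P (Fin.cons 2 w), walkWeight pm p0 p1 w := by
  simp only [Finset.sum_filter]
  rw [← (Fin.consEquiv (fun _ : Fin (n + 1) => Fin 3)).sum_comp, Fintype.sum_prod_type]
  simp [Fin.sum_univ_three, Fin.consEquiv, walkWeight, Fin.prod_univ_succ, stepWeight,
    Finset.mul_sum]

lemma sum_walkWeight (n : ℕ) :
    ∑ w : Fin n → Fin 3, walkWeight pm p0 p1 w = (pm + p0 + p1) ^ n := by
  simp only [walkWeight]
  rw [← Fintype.sum_pow]
  simp [Fin.sum_univ_three, stepWeight]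

lemma walkWeight_smul (c : ℝ) {n : ℕ} (w : Fin n → Fin 3) :
    walkWeight (c * pm) (c * p0) (c * p1) w = c ^ n * walkWeight pm p0 p1 w := by
  have hstep (s : Fin 3) :
      stepWeight (c * pm) (c * p0) (c * p1) s = c * stepWeight pm p0 p1 s := by
    simp only [stepWeight, mul_ite]
  simp [walkWeight, hstep, Finset.prod_mul_distrib]

lemma walkRetW_smul (c : ℝ) (n k : ℕ) :
    walkRetW (c * pm) (c * p0) (c * p1) n k = c ^ n * walkRetW pm p0 p1 n k := by
  simp only [walkRetW, walkWeight_smul, Finset.mul_sum]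

/-- Total weight of the walks of length `n` which, started at height `h`, visit zero at most `k`
times. -/
noncomputable def visitsLeW (n : ℕ) (h : ℤ) (k : ℕ) : ℝ :=
  ∑ w : Fin n → Fin 3 with visits h w ≤ k, walkWeight pm p0 p1 w

lemma visitsLeW_succ (n : ℕ) {h : ℤ} (hh : h ≠ 0) (k : ℕ) :
    visitsLeW pm p0 p1 (n + 1) h k = pm * visitsLeW pm p0 p1 n (h - 1) k +
      p0 * visitsLeW pm p0 p1 n h k + p1 * visitsLeW pm p0 p1 n (h + 1) k := by
  rw [visitsLeW, sum_walkWeight_filter_cons]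
  simp [visitsLeW, visits_cons, hh, stepVal, sub_eq_add_neg]

lemma visitsLeW_succ_zero_succ (n k : ℕ) :
    visitsLeW pm p0 p1 (n + 1) 0 (k + 1) = pm * visitsLeW pm p0 p1 n (-1) k +
      p0 * visitsLeW pm p0 p1 n 0 k + p1 * visitsLeW pm p0 p1 n 1 k := by
  rw [visitsLeW, sum_walkWeight_filter_cons]
  simp [visitsLeW, visits_cons, stepVal]

lemma visitsLeW_zero_zero (n : ℕ) : visitsLeW pm p0 p1 n 0 0 = 0 := by
  simp [visitsLeW, visits_zero_eq_retZero_add_one]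

lemma visitsLeW_of_le {n k : ℕ} (hnk : n ≤ k) {h : ℤ} (hh : h ≠ 0) :
    visitsLeW pm p0 p1 n h k = (pm + p0 + p1) ^ n := by
  simp [visitsLeW, fun w : Fin n → Fin 3 => (visits_le_of_ne_zero hh w).trans hnk,
    sum_walkWeight]

lemma sum_range_walkRetW (n k : ℕ) :
    ∑ j ∈ Finset.range k, walkRetW pm p0 p1 n j = visitsLeW pm p0 p1 n 0 k := by
  simp only [walkRetW, visitsLeW, Finset.sum_filter]
  rw [Finset.sum_comm]
  simp [visits_zero_eq_retZero_add_one, Finset.sum_ite_eq]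

end Visits

section SignSum

open LaurentPolynomial

/-- The linear functional `∑ₘ cₘ Tᵐ ↦ ∑ₘ sign(m) cₘ`. If the `cₘ` are the probabilities of an
integer-valued random variable `S`, it is the expectation of `sign S`. -/
noncomputable def signSum : ℝ[T;T⁻¹] →ₗ[ℝ] ℝ :=
  Finsupp.linearCombination ℝ (fun m : ℤ => Real.sign m) ∘ₗ
    (AddMonoidAlgebra.coeffLinearEquiv ℝ : ℝ[T;T⁻¹] ≃ₗ[ℝ] ℤ →₀ ℝ)

lemma signSum_apply (f : ℝ[T;T⁻¹]) :
    signSum f = ∑ m ∈ f.coeff.support, f.coeff m * Real.sign m := rfl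

lemma signSum_C_mul (c : ℝ) (f : ℝ[T;T⁻¹]) : signSum (C c * f) = c * signSum f := by
  rw [← smul_eq_C_mul, map_smul, smul_eq_mul]

lemma signSum_T (m : ℤ) : signSum (T m) = Real.sign m := by
  simp [signSum, T, -single_eq_C_mul_T]

lemma signSum_invert (f : ℝ[T;T⁻¹]) : signSum (invert f) = -signSum f := by
  induction f using LaurentPolynomial.induction_on' with
  | add f g hf hg => simp only [map_add, hf, hg, neg_add]
  | C_mul_T n a => simp [signSum_C_mul, signSum_T, Real.sign_neg]

variable (p q : ℝ)

/-- The generating function `p T⁻¹ + q + p T` of one step of a symmetric Motzkin walk. -/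
noncomputable def jumpPoly : ℝ[T;T⁻¹] := C p * T (-1) + C q + C p * T 1

/-- The generating function `q + 2p T` of one step out of zero of the absolute value of a symmetric
Motzkin walk. -/
noncomputable def foldedJumpPoly : ℝ[T;T⁻¹] := C q + C (2 * p) * T 1

lemma invert_jumpPoly : invert (jumpPoly p q) = jumpPoly p q := by
  simp only [jumpPoly, map_add, map_mul, invert_C, invert_T, neg_neg]
  ring

lemma signSum_jumpPoly_pow (n : ℕ) : signSum (jumpPoly p q ^ n) = 0 := by
  have h := signSum_invert (jumpPoly p q ^ n)
  rw [map_pow, invert_jumpPoly] at h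
  linarith

lemma signSum_T_mul_jumpPoly_mul (h : ℤ) (f : ℝ[T;T⁻¹]) :
    signSum (T h * (jumpPoly p q * f)) =
      p * signSum (T (h - 1) * f) + q * signSum (T h * f) + p * signSum (T (h + 1) * f) := by
  simp only [← signSum_C_mul, ← map_add, jumpPoly, T_add, T_sub]
  congr 1
  ring

lemma signSum_T_mul_foldedJumpPoly_mul (h : ℤ) (f : ℝ[T;T⁻¹]) :
    signSum (T h * (foldedJumpPoly p q * f)) =
      q * signSum (T h * f) + 2 * p * signSum (T (h + 1) * f) := by
  simp only [← signSum_C_mul, ← map_add, foldedJumpPoly, T_add]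
  congr 1
  ring

lemma signSum_T_mul_foldedJumpPoly_pow {h : ℤ} (hh : 0 < h) (k : ℕ) :
    signSum (T h * foldedJumpPoly p q ^ k) = (p + q + p) ^ k := by
  induction k generalizing h with
  | zero => simp [signSum_T, Real.sign_of_pos (Int.cast_pos.2 hh)]
  | succ k ih =>
    rw [pow_succ', signSum_T_mul_foldedJumpPoly_mul, ih hh, ih (by omega)]
    ring

lemma map_abs_sub_one_add_map_abs_add_one {M : Type*} [AddCommMonoid M] (F : ℤ → M) {h : ℤ}
    (hh : h ≠ 0) : F |h - 1| + F |h + 1| = F (|h| - 1) + F (|h| + 1) := by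
  rcases lt_or_gt_of_ne hh with hneg | hpos
  · rw [abs_of_neg hneg, abs_of_neg (by omega), abs_of_nonpos (by omega), add_comm]
    congr 2 <;> ring
  · rw [abs_of_pos hpos, abs_of_nonneg (by omega), abs_of_pos (by omega)]

lemma visitsLeW_eq_signSum_of_zero {k : ℕ}
    (h_zero : ∀ N, visitsLeW p q p (k + N) 0 k =
      signSum (T 0 * (foldedJumpPoly p q ^ k * jumpPoly p q ^ N))) (N : ℕ) (h : ℤ) :
    visitsLeW p q p (k + N) h k =
      signSum (T |h| * (foldedJumpPoly p q ^ k * jumpPoly p q ^ N)) := by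
  induction N generalizing h with
  | zero =>
    rcases eq_or_ne h 0 with rfl | hh
    · rw [h_zero, abs_zero]
    · rw [visitsLeW_of_le _ _ _ (by omega) hh, pow_zero, mul_one,
        signSum_T_mul_foldedJumpPoly_pow p q (abs_pos.2 hh), add_zero]
  | succ N ih =>
    rcases eq_or_ne h 0 with rfl | hh
    · rw [h_zero, abs_zero]
    · have h_abs := map_abs_sub_one_add_map_abs_add_one
        (fun m => signSum (T m * (foldedJumpPoly p q ^ k * jumpPoly p q ^ N))) hh
      rw [← add_assoc, visitsLeW_succ _ _ _ _ hh, ih, ih, ih, pow_succ',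
        mul_left_comm (foldedJumpPoly p q ^ k) (jumpPoly p q), signSum_T_mul_jumpPoly_mul]
      linear_combination p * h_abs

lemma visitsLeW_eq_signSum (N k : ℕ) (h : ℤ) :
    visitsLeW p q p (k + N) h k =
      signSum (T |h| * (foldedJumpPoly p q ^ k * jumpPoly p q ^ N)) := by
  induction k generalizing N h with
  | zero =>
    refine visitsLeW_eq_signSum_of_zero p q (fun N => ?_) N h
    rw [visitsLeW_zero_zero, T_zero, one_mul, pow_zero, one_mul, signSum_jumpPoly_pow]
  | succ k ih =>
    refine visitsLeW_eq_signSum_of_zero p q (fun N => ?_) N h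
    rw [Nat.succ_add, visitsLeW_succ_zero_succ, ih, ih, ih, pow_succ', mul_assoc,
      signSum_T_mul_foldedJumpPoly_mul]
    simp only [abs_neg, abs_one, abs_zero, zero_add]
    ring

lemma sum_range_walkRetW_eq_signSum {n k : ℕ} (hkn : k ≤ n) :
    ∑ j ∈ Finset.range k, walkRetW p q p n j =
      signSum (foldedJumpPoly p q ^ k * jumpPoly p q ^ (n - k)) := by
  have h := visitsLeW_eq_signSum p q (n - k) k 0
  rwa [Nat.add_sub_cancel' hkn, abs_zero, T_zero, one_mul, ← sum_range_walkRetW] at h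

end SignSum

open MeasureTheory ProbabilityTheory Filter Topology

section Sign

lemma sign_eq_indicator_sub_indicator (y : ℝ) :
    Real.sign y = (Set.Ioi (0 : ℝ)).indicator 1 y - (Set.Iio (0 : ℝ)).indicator 1 y := by
  rcases lt_trichotomy y 0 with h | rfl | h
  · simp [Real.sign_of_neg h, h, h.le]
  · simp
  · simp [Real.sign_of_pos h, h, h.le]

lemma sign_mul_of_pos {c : ℝ} (hc : 0 < c) (y : ℝ) : Real.sign (c * y) = Real.sign y := by
  simp [sign_eq_indicator_sub_indicator, Set.indicator_apply, hc, mul_neg_iff, hc.not_gt]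

lemma integral_sign (μ : Measure ℝ) [IsFiniteMeasure μ] :
    ∫ y, Real.sign y ∂μ = μ.real (Set.Ioi 0) - μ.real (Set.Iio 0) := by
  simp only [sign_eq_indicator_sub_indicator]
  rw [integral_sub ((integrable_const 1).indicator measurableSet_Ioi)
      ((integrable_const 1).indicator measurableSet_Iio),
    integral_indicator_one measurableSet_Ioi, integral_indicator_one measurableSet_Iio]

lemma tendsto_integral_sign_of_tendsto_charFun {μ : ℕ → Measure ℝ} {γ : Measure ℝ}
    [∀ n, IsProbabilityMeasure (μ n)] [IsProbabilityMeasure γ] (hγ : γ {0} = 0)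
    (h : ∀ t, Tendsto (fun n => charFun (μ n) t) atTop (𝓝 (charFun γ t))) :
    Tendsto (fun n => ∫ y, Real.sign y ∂μ n) atTop (𝓝 (∫ y, Real.sign y ∂γ)) := by
  let ν (n : ℕ) : ProbabilityMeasure ℝ := ⟨μ n, inferInstance⟩
  let γ' : ProbabilityMeasure ℝ := ⟨γ, inferInstance⟩
  have hν : Tendsto ν atTop (𝓝 γ') := ProbabilityMeasure.tendsto_iff_tendsto_charFun.2 h
  have h_real {s : Set ℝ} (hs : frontier s = {0}) :
      Tendsto (fun n => (μ n).real s) atTop (𝓝 (γ.real s)) :=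
    (ENNReal.tendsto_toReal (measure_ne_top γ s)).comp
      (ProbabilityMeasure.tendsto_measure_of_null_frontier_of_tendsto' hν
        (by rw [hs]; exact hγ))
  simp only [integral_sign]
  exact (h_real frontier_Ioi).sub (h_real frontier_Iio)

lemma integral_sign_gaussianReal (x : ℝ) (v : NNReal) :
    ∫ y, Real.sign y ∂gaussianReal x v =
      (gaussianReal 0 v).real (Set.Ioi (-x)) - (gaussianReal 0 v).real (Set.Ioi x) := by
  have h_shift : (gaussianReal 0 v).map (x + ·) = gaussianReal x v := by
    rw [gaussianReal_map_const_add, zero_add]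
  have h_reflect : (gaussianReal 0 v).map (x - ·) = gaussianReal x v := by
    rw [gaussianReal_map_const_sub, sub_zero]
  rw [integral_sign]
  congr 1
  · rw [← h_shift, map_measureReal_apply (by fun_prop) measurableSet_Ioi]
    simp
  · rw [← h_reflect, map_measureReal_apply (by fun_prop) measurableSet_Iio]
    simp

lemma two_mul_gaussianPDFReal_zero (v : NNReal) (t : ℝ) :
    2 * gaussianPDFReal 0 v t = √(2 / (Real.pi * v)) * Real.exp (-t ^ 2 / (2 * v)) := by
  have h_sqrt : √(2 / (Real.pi * v)) = 2 * (√(2 * Real.pi * v))⁻¹ := by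
    rw [← Real.sqrt_inv]
    nth_rw 2 [← Real.sqrt_sq zero_le_two]
    rw [← Real.sqrt_mul (by positivity)]
    congr 1
    field_simp
  rw [gaussianPDFReal, h_sqrt, sub_zero, ← mul_assoc]

lemma intervalIntegral_neg_self_eq_two_mul {f : ℝ → ℝ} (hf : Function.Even f) {x : ℝ}
    (hfi : IntervalIntegrable f volume 0 x) :
    ∫ t in (-x)..x, f t = 2 * ∫ t in (0 : ℝ)..x, f t := by
  have h_comp : (fun t => f (-t)) = f := funext hf
  have h_left : ∫ t in (-x)..0, f t = ∫ t in (0 : ℝ)..x, f t := by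
    simpa only [h_comp, neg_zero] using
      (intervalIntegral.integral_comp_neg (a := 0) (b := x) f).symm
  have hfi_left : IntervalIntegrable f volume (-x) 0 := by
    rw [IntervalIntegrable.iff_comp_neg, h_comp, neg_neg, neg_zero]
    exact hfi.symm
  rw [← intervalIntegral.integral_add_adjacent_intervals hfi_left hfi, h_left, two_mul]

lemma integral_sign_gaussianReal_eq_intervalIntegral {v : NNReal} (hv : v ≠ 0) {x : ℝ}
    (hx : 0 ≤ x) :
    ∫ y, Real.sign y ∂gaussianReal x v =
      ∫ t in (0 : ℝ)..x, √(2 / (Real.pi * v)) * Real.exp (-t ^ 2 / (2 * v)) := by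
  have hle : -x ≤ x := by linarith
  have h_even : Function.Even (gaussianPDFReal 0 v) := fun t => by simp [gaussianPDFReal]
  calc ∫ y, Real.sign y ∂gaussianReal x v
      = (gaussianReal 0 v).real (Set.Ioc (-x) x) := by
        rw [integral_sign_gaussianReal, ← Set.Ioi_sdiff_Ioi,
          measureReal_sdiff (Set.Ioi_subset_Ioi hle) measurableSet_Ioi]
    _ = ∫ t in (-x)..x, gaussianPDFReal 0 v t := by
        rw [measureReal_def, gaussianReal_apply_eq_integral _ hv, ENNReal.toReal_ofReal
          (integral_nonneg (gaussianPDFReal_nonneg _ _)), intervalIntegral.integral_of_le hle]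
    _ = ∫ t in (0 : ℝ)..x, 2 * gaussianPDFReal 0 v t := by
        rw [intervalIntegral_neg_self_eq_two_mul h_even
          (integrable_gaussianPDFReal 0 v).intervalIntegrable, intervalIntegral.integral_const_mul]
    _ = _ := by simp only [two_mul_gaussianPDFReal_zero]

end Sign

section LaurentLaw

open LaurentPolynomial

lemma coeff_mul_nonneg {f g : ℝ[T;T⁻¹]} (hf : ∀ m, 0 ≤ f.coeff m) (hg : ∀ m, 0 ≤ g.coeff m)
    (m : ℤ) : 0 ≤ (f * g).coeff m := by
  rw [AddMonoidAlgebra.coeff_mul]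
  refine Finset.sum_nonneg fun i _ => Finset.sum_nonneg fun j _ => ?_
  dsimp only
  split_ifs
  exacts [mul_nonneg (hf i) (hg j), le_rfl]

lemma coeff_pow_nonneg {f : ℝ[T;T⁻¹]} (hf : ∀ m, 0 ≤ f.coeff m) (n : ℕ) (m : ℤ) :
    0 ≤ (f ^ n).coeff m := by
  induction n generalizing m with
  | zero =>
    rw [pow_zero, ← T_zero, T_apply]
    positivity
  | succ n ih => rw [pow_succ]; exact coeff_mul_nonneg ih hf m

lemma coeff_C_mul_T (a : ℝ) (n m : ℤ) : (C a * T n).coeff m = if n = m then a else 0 := by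
  rw [← single_eq_C_mul_T, AddMonoidAlgebra.coeff_single, Finsupp.single_apply]

lemma coeff_jumpPoly_nonneg {p q : ℝ} (hp : 0 ≤ p) (hq : 0 ≤ q) (m : ℤ) :
    0 ≤ (jumpPoly p q).coeff m := by
  simp only [jumpPoly, AddMonoidAlgebra.coeff_add, Finsupp.add_apply, coeff_C_mul_T, C_apply]
  positivity

lemma coeff_foldedJumpPoly_nonneg {p q : ℝ} (hp : 0 ≤ p) (hq : 0 ≤ q) (m : ℤ) :
    0 ≤ (foldedJumpPoly p q).coeff m := by
  simp only [foldedJumpPoly, AddMonoidAlgebra.coeff_add, Finsupp.add_apply, coeff_C_mul_T, C_apply]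
  positivity

lemma coeff_foldedJumpPoly_pow_mul_jumpPoly_pow_nonneg {p q : ℝ} (hp : 0 ≤ p) (hq : 0 ≤ q)
    (k N : ℕ) (m : ℤ) : 0 ≤ (foldedJumpPoly p q ^ k * jumpPoly p q ^ N).coeff m :=
  coeff_mul_nonneg (coeff_pow_nonneg (coeff_foldedJumpPoly_nonneg hp hq) k)
    (coeff_pow_nonneg (coeff_jumpPoly_nonneg hp hq) N) m

/-- The measure with mass `f.coeff m` at `c * m` for every `m`: if `f` is the generating function of
an integer-valued random variable `S`, this is the law of `c * S`. Negative coefficients are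
replaced by zero. -/
noncomputable def laurentLaw (c : ℝ) (f : ℝ[T;T⁻¹]) : Measure ℝ :=
  ∑ m ∈ f.coeff.support, ENNReal.ofReal (f.coeff m) • Measure.dirac (c * m)

variable {f : ℝ[T;T⁻¹]}

lemma integral_laurentLaw {E : Type*} [NormedAddCommGroup E] [NormedSpace ℝ E] [CompleteSpace E]
    (c : ℝ) (hf : ∀ m, 0 ≤ f.coeff m) (g : ℝ → E) :
    ∫ y, g y ∂laurentLaw c f = ∑ m ∈ f.coeff.support, f.coeff m • g (c * m) := by
  rw [laurentLaw, integral_finsetSum_measure fun m _ =>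
    (integrable_dirac (by simp)).smul_measure ENNReal.ofReal_ne_top]
  refine Finset.sum_congr rfl fun m _ => ?_
  rw [integral_smul_measure, integral_dirac, ENNReal.toReal_ofReal (hf m)]

lemma integral_sign_laurentLaw {c : ℝ} (hc : 0 < c) (hf : ∀ m, 0 ≤ f.coeff m) :
    ∫ y, Real.sign y ∂laurentLaw c f = signSum f := by
  simp only [integral_laurentLaw c hf, sign_mul_of_pos hc, smul_eq_mul, signSum_apply]

lemma eval₂_eq_finsuppSum {R S : Type*} [CommSemiring R] [CommSemiring S] (φ : R →+* S) (z : Sˣ)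
    (f : R[T;T⁻¹]) : eval₂ φ z f = f.coeff.sum fun m a => φ a * (z ^ m : Sˣ) := by
  induction f using LaurentPolynomial.induction_on' with
  | add f g hf hg =>
    rw [map_add, hf, hg, AddMonoidAlgebra.coeff_add, Finsupp.sum_add_index' (by simp)
      (by simp [add_mul])]
  | C_mul_T n a =>
    rw [eval₂_C_mul_T, ← single_eq_C_mul_T, AddMonoidAlgebra.coeff_single,
      Finsupp.sum_single_index (by simp)]

lemma charFun_laurentLaw (c : ℝ) (hf : ∀ m, 0 ≤ f.coeff m) (t : ℝ) :
    charFun (laurentLaw c f) t =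
      eval₂ Complex.ofRealHom (Circle.toUnits (Circle.exp (c * t))) f := by
  rw [charFun_apply_real, integral_laurentLaw c hf, eval₂_eq_finsuppSum, Finsupp.sum]
  refine Finset.sum_congr rfl fun m _ => ?_
  rw [Complex.real_smul, ← map_zpow, Circle.toUnits_apply, Units.val_mk0, ← Circle.exp_zsmul,
    Circle.coe_exp]
  congr 3
  simp only [zsmul_eq_mul]
  push_cast
  ring

lemma isProbabilityMeasure_laurentLaw (c : ℝ) (hf : ∀ m, 0 ≤ f.coeff m)
    (hf1 : eval₂ (RingHom.id ℝ) 1 f = 1) : IsProbabilityMeasure (laurentLaw c f) := by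
  have h_mass := integral_laurentLaw c hf fun _ => (1 : ℝ)
  have h_sum : ∑ m ∈ f.coeff.support, f.coeff m = 1 := by
    simpa [eval₂_eq_finsuppSum, Finsupp.sum] using hf1
  rw [isProbabilityMeasure_iff_real]
  simpa [h_sum] using h_mass

end LaurentLaw

section CentralLimit

open LaurentPolynomial

lemma tendsto_one_add_pow_exp {ι : Type*} {l : Filter ι} {g : ι → ℂ} {k : ι → ℕ} {z : ℂ}
    (hg : Tendsto g l (𝓝 0)) (hkg : Tendsto (fun i => k i * g i) l (𝓝 z)) :
    Tendsto (fun i => (1 + g i) ^ k i) l (𝓝 (Complex.exp z)) := by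
  let logOneAdd (w : ℂ) : ℂ := Complex.log (1 + w)
  have h_deriv : HasDerivAt logOneAdd 1 0 := by
    simpa using ((hasDerivAt_id (0 : ℂ)).const_add 1).clog (by simp)
  have h_slope : Tendsto (fun i => dslope logOneAdd 0 (g i)) l (𝓝 1) := by
    have h := (continuousAt_dslope_same.2 h_deriv.differentiableAt).tendsto.comp hg
    rwa [dslope_same, h_deriv.deriv] at h
  have h_exp := (Complex.continuous_exp.tendsto _).comp (hkg.mul h_slope)
  rw [mul_one] at h_exp
  have h_ne : ∀ᶠ i in l, 1 + g i ≠ 0 := by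
    have h : Tendsto (fun i => 1 + g i) l (𝓝 (1 + 0)) := hg.const_add 1
    exact h.eventually_ne (by simp)
  refine h_exp.congr' ?_
  filter_upwards [h_ne] with i hi
  have h_log : g i * dslope logOneAdd 0 (g i) = Complex.log (1 + g i) := by
    simpa [logOneAdd] using sub_smul_dslope logOneAdd 0 (g i)
  rw [Function.comp_apply, mul_assoc, h_log, Complex.exp_nat_mul, Complex.exp_log hi]

lemma tendsto_sqrt_natCast_atTop : Tendsto (fun n : ℕ => √(n : ℝ)) atTop atTop :=
  Real.tendsto_sqrt_atTop.comp tendsto_natCast_atTop_atTop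

lemma tendsto_sqrt_mul_exp_div_sqrt_sub_one (c : ℂ) :
    Tendsto (fun n : ℕ => (√n : ℂ) * (Complex.exp (c / √n) - 1)) atTop (𝓝 c) := by
  have h_deriv : HasDerivAt (fun s : ℝ => Complex.exp (s * c)) c 0 := by
    simpa using ((hasDerivAt_id (0 : ℝ)).ofReal_comp.mul_const c).cexp
  have h_inv : Tendsto (fun n : ℕ => (√(n : ℝ))⁻¹) atTop (𝓝[≠] 0) :=
    (tendsto_inv_atTop_nhdsGT_zero.comp tendsto_sqrt_natCast_atTop).mono_right
      (nhdsWithin_mono _ fun _ h => ne_of_gt h)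
  refine ((hasDerivAt_iff_tendsto_slope_zero.1 h_deriv).comp h_inv).congr fun n => ?_
  simp [div_eq_inv_mul]

variable (p q : ℝ)

lemma eval₂_jumpPoly (z : ℂˣ) :
    eval₂ Complex.ofRealHom z (jumpPoly p q) =
      (p + q + p : ℝ) + p * (z : ℂ)⁻¹ * ((z : ℂ) - 1) ^ 2 := by
  simp only [jumpPoly, Int.reduceNeg, map_add, eval₂_C_mul_T, Complex.ofRealHom_eq_coe, zpow_neg,
    zpow_ofNat, pow_one, Units.val_inv_eq_inv_val, eval₂_C, Complex.ofReal_add]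
  field_simp
  ring

lemma eval₂_foldedJumpPoly (z : ℂˣ) :
    eval₂ Complex.ofRealHom z (foldedJumpPoly p q) =
      (p + q + p : ℝ) + 2 * p * ((z : ℂ) - 1) := by
  simp only [foldedJumpPoly, map_mul, map_add, eval₂_C, Complex.ofRealHom_eq_coe,
    Complex.ofReal_ofNat, eval₂_T, zpow_ofNat, pow_one, Complex.ofReal_add]
  ring

lemma eval₂_one_jumpPoly : eval₂ (RingHom.id ℝ) 1 (jumpPoly p q) = p + q + p := by
  simp [jumpPoly]

lemma eval₂_one_foldedJumpPoly : eval₂ (RingHom.id ℝ) 1 (foldedJumpPoly p q) = p + q + p := by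
  simp only [foldedJumpPoly, map_add, eval₂_C, eval₂_C_mul_T, RingHom.id_apply,
    one_zpow, Units.val_one]
  ring

lemma eventually_ofReal_sqrt_natCast_ne_zero : ∀ᶠ n : ℕ in atTop, ((√n : ℝ) : ℂ) ≠ 0 := by
  filter_upwards [tendsto_sqrt_natCast_atTop.eventually_ne_atTop 0] with n hn
  exact_mod_cast hn

lemma tendsto_one_of_tendsto_sqrt_mul_sub_one {u : ℕ → ℂ} {w : ℂ}
    (hu : Tendsto (fun n : ℕ => (√n : ℂ) * (u n - 1)) atTop (𝓝 w)) :
    Tendsto u atTop (𝓝 1) := by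
  have h_inv : Tendsto (fun n : ℕ => ((√n : ℝ) : ℂ)⁻¹) atTop (𝓝 0) := by
    simpa using (tendsto_inv_atTop_zero.comp tendsto_sqrt_natCast_atTop).ofReal
  have h := (h_inv.mul hu).const_add 1
  rw [zero_mul, add_zero] at h
  refine h.congr' ?_
  filter_upwards [eventually_ofReal_sqrt_natCast_ne_zero] with n hn
  rw [inv_mul_cancel_left₀ hn, add_sub_cancel]

variable {p q} {z : ℕ → ℂˣ} {w : ℂ}

lemma tendsto_eval₂_foldedJumpPoly_pow (hpq : p + q + p = 1)
    (hz : Tendsto (fun n : ℕ => (√n : ℂ) * ((z n : ℂ) - 1)) atTop (𝓝 w)) {k : ℕ → ℕ} {x : ℝ}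
    (hk : Tendsto (fun n => (k n : ℝ) / √n) atTop (𝓝 x)) :
    Tendsto (fun n => eval₂ Complex.ofRealHom (z n) (foldedJumpPoly p q) ^ k n) atTop
      (𝓝 (Complex.exp (2 * p * x * w))) := by
  have hz_one := tendsto_one_of_tendsto_sqrt_mul_sub_one hz
  simp only [eval₂_foldedJumpPoly, hpq, Complex.ofReal_one]
  refine tendsto_one_add_pow_exp ?_ ?_
  · simpa using (hz_one.sub_const 1).const_mul (2 * p : ℂ)
  · refine ((hk.ofReal.const_mul (2 * p : ℂ)).mul hz).congr' ?_
    filter_upwards [eventually_ofReal_sqrt_natCast_ne_zero] with n hn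
    push_cast
    field_simp

lemma tendsto_eval₂_jumpPoly_pow (hpq : p + q + p = 1)
    (hz : Tendsto (fun n : ℕ => (√n : ℂ) * ((z n : ℂ) - 1)) atTop (𝓝 w)) {N : ℕ → ℕ}
    (hN : Tendsto (fun n => (N n : ℝ) / n) atTop (𝓝 1)) :
    Tendsto (fun n => eval₂ Complex.ofRealHom (z n) (jumpPoly p q) ^ N n) atTop
      (𝓝 (Complex.exp (p * w ^ 2))) := by
  have hz_one := tendsto_one_of_tendsto_sqrt_mul_sub_one hz
  have hz_inv : Tendsto (fun n => p * (z n : ℂ)⁻¹) atTop (𝓝 p) := by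
    simpa using (hz_one.inv₀ one_ne_zero).const_mul (p : ℂ)
  simp only [eval₂_jumpPoly, hpq, Complex.ofReal_one]
  refine tendsto_one_add_pow_exp ?_ ?_
  · simpa using hz_inv.mul ((hz_one.sub_const 1).pow 2)
  · have h := hN.ofReal.mul (hz_inv.mul (hz.pow 2))
    rw [Complex.ofReal_one, one_mul] at h
    refine h.congr' ?_
    filter_upwards [eventually_ne_atTop 0] with n hn
    have h_sqrt : ((√n : ℝ) : ℂ) ^ 2 = n := by
      rw [← Complex.ofReal_pow, Real.sq_sqrt n.cast_nonneg, Complex.ofReal_natCast]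
    rw [mul_pow, h_sqrt]
    push_cast
    field_simp

lemma tendsto_charFun_laurentLaw (hp : 0 < p) (hq : 0 ≤ q) (hpq : p + q + p = 1) {k N : ℕ → ℕ}
    {x : ℝ} (hk : Tendsto (fun n => (k n : ℝ) / √n) atTop (𝓝 x))
    (hN : Tendsto (fun n => (N n : ℝ) / n) atTop (𝓝 1)) (t : ℝ) :
    Tendsto (fun n : ℕ => charFun (laurentLaw (2 * p * √n)⁻¹
        (foldedJumpPoly p q ^ k n * jumpPoly p q ^ N n)) t) atTop
      (𝓝 (charFun (gaussianReal x (Real.toNNReal (2 * p)⁻¹)) t)) := by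
  have hz : Tendsto (fun n : ℕ => (√n : ℂ) *
      ((Circle.toUnits (Circle.exp ((2 * p * √n)⁻¹ * t)) : ℂ) - 1)) atTop
      (𝓝 (t / (2 * p) * Complex.I)) := by
    refine (tendsto_sqrt_mul_exp_div_sqrt_sub_one _).congr fun n => ?_
    rw [Circle.toUnits_apply, Units.val_mk0, Circle.coe_exp]
    congr 3
    push_cast
    field_simp
  have h := (tendsto_eval₂_foldedJumpPoly_pow hpq hz hk).mul
    (tendsto_eval₂_jumpPoly_pow hpq hz hN)
  have hpC : (p : ℂ) ≠ 0 := by exact_mod_cast hp.ne'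
  have h_exponent : 2 * p * x * (t / (2 * p) * Complex.I) + p * (t / (2 * p) * Complex.I) ^ 2 =
      t * x * Complex.I - ((Real.toNNReal (2 * p)⁻¹ : ℝ) : ℂ) * t ^ 2 / 2 := by
    rw [Real.coe_toNNReal _ (by positivity), mul_pow, Complex.I_sq]
    push_cast
    field_simp
    ring
  rw [charFun_gaussianReal, ← h_exponent, Complex.exp_add]
  refine h.congr fun n => ?_
  rw [charFun_laurentLaw _ (coeff_foldedJumpPoly_pow_mul_jumpPoly_pow_nonneg hp.le hq _ _),
    RingHom.map_mul, RingHom.map_pow, RingHom.map_pow]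

lemma tendsto_signSum (hp : 0 < p) (hq : 0 ≤ q) (hpq : p + q + p = 1) {k N : ℕ → ℕ} {x : ℝ}
    (hx : 0 ≤ x) (hk : Tendsto (fun n => (k n : ℝ) / √n) atTop (𝓝 x))
    (hN : Tendsto (fun n => (N n : ℝ) / n) atTop (𝓝 1)) :
    Tendsto (fun n => signSum (foldedJumpPoly p q ^ k n * jumpPoly p q ^ N n)) atTop
      (𝓝 (∫ t in (0 : ℝ)..x,
        √(2 / (Real.pi * (2 * p)⁻¹)) * Real.exp (-t ^ 2 / (2 * (2 * p)⁻¹)))) := by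
  have hv : Real.toNNReal (2 * p)⁻¹ ≠ 0 := (Real.toNNReal_pos.2 (by positivity)).ne'
  have h_nonneg (n : ℕ) := coeff_foldedJumpPoly_pow_mul_jumpPoly_pow_nonneg hp.le hq (k n) (N n)
  have h_prob (n : ℕ) : IsProbabilityMeasure
      (laurentLaw (2 * p * √n)⁻¹ (foldedJumpPoly p q ^ k n * jumpPoly p q ^ N n)) := by
    refine isProbabilityMeasure_laurentLaw _ (h_nonneg n) ?_
    rw [map_mul, map_pow, map_pow, eval₂_one_foldedJumpPoly, eval₂_one_jumpPoly, hpq, one_pow,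
      one_pow, mul_one]
  have := nullSingletonClass_gaussianReal (μ := x) hv
  have h := tendsto_integral_sign_of_tendsto_charFun (measure_singleton 0)
    (tendsto_charFun_laurentLaw hp hq hpq hk hN)
  rw [integral_sign_gaussianReal_eq_intervalIntegral hv hx,
    Real.coe_toNNReal _ (by positivity)] at h
  refine h.congr' ?_
  filter_upwards [eventually_gt_atTop 0] with n hn
  exact integral_sign_laurentLaw (by positivity) (h_nonneg n)

end CentralLimit

section Returns

lemma tendsto_floor_mul_sqrt_add_one_div_sqrt {x : ℝ} (hx : 0 ≤ x) :
    Tendsto (fun n : ℕ => ((⌊x * √n⌋₊ + 1 : ℕ) : ℝ) / √n) atTop (𝓝 x) := by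
  have h_floor := (tendsto_nat_floor_mul_div_atTop hx).comp tendsto_sqrt_natCast_atTop
  have h_inv := tendsto_inv_atTop_zero.comp tendsto_sqrt_natCast_atTop
  have h := h_floor.add h_inv
  rw [add_zero] at h
  refine h.congr fun n => ?_
  simp only [Function.comp_apply]
  push_cast
  rw [add_div, one_div]

variable {k : ℕ → ℕ} {x : ℝ}

lemma tendsto_div_natCast_zero_of_tendsto_div_sqrt
    (hk : Tendsto (fun n => (k n : ℝ) / √n) atTop (𝓝 x)) :
    Tendsto (fun n => (k n : ℝ) / n) atTop (𝓝 0) := by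
  have h := hk.mul (tendsto_inv_atTop_zero.comp tendsto_sqrt_natCast_atTop)
  rw [mul_zero] at h
  refine h.congr fun n => ?_
  rw [Function.comp_apply, ← div_eq_mul_inv, div_div, Real.mul_self_sqrt n.cast_nonneg]

lemma eventually_le_of_tendsto_div_natCast_zero
    (hk : Tendsto (fun n => (k n : ℝ) / n) atTop (𝓝 0)) : ∀ᶠ n in atTop, k n ≤ n := by
  filter_upwards [hk.eventually_le_const zero_lt_one, eventually_gt_atTop 0] with n hn hn0
  rw [div_le_one (by exact_mod_cast hn0)] at hn
  exact_mod_cast hn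

lemma tendsto_natCast_sub_div_one (hk : Tendsto (fun n => (k n : ℝ) / n) atTop (𝓝 0)) :
    Tendsto (fun n => ((n - k n : ℕ) : ℝ) / n) atTop (𝓝 1) := by
  have h := hk.const_sub 1
  rw [sub_zero] at h
  refine h.congr' ?_
  filter_upwards [eventually_le_of_tendsto_div_natCast_zero hk, eventually_gt_atTop 0] with n hn hn0
  rw [Nat.cast_sub hn]
  field_simp

end Returns

theorem returns_to_zero_half_normal_general {p q : ℝ} (hp : 0 < p) (hq : 0 ≤ q) :
    let P1 : ℝ := p + q + p
    let σ : ℝ := √(P1 / (2 * p))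
    ∀ x : ℝ, 0 ≤ x →
      Tendsto
        (fun n : ℕ => (∑ k ∈ Finset.range (⌊x * √n⌋₊ + 1), walkRetW p q p n k) / P1 ^ n) atTop
        (𝓝 (∫ t in (0 : ℝ)..x,
          √(2 / (Real.pi * σ ^ 2)) * Real.exp (-t ^ 2 / (2 * σ ^ 2)))) := by
  intro P1 σ x hx
  have hP1 : 0 < P1 := by positivity
  have hσ : σ ^ 2 = (2 * (P1⁻¹ * p))⁻¹ := by
    rw [Real.sq_sqrt (by positivity)]
    field_simp
  have h_total : P1⁻¹ * p + P1⁻¹ * q + P1⁻¹ * p = 1 := by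
    rw [← mul_add, ← mul_add, inv_mul_cancel₀ hP1.ne']
  have hk := tendsto_floor_mul_sqrt_add_one_div_sqrt hx
  have hk_zero := tendsto_div_natCast_zero_of_tendsto_div_sqrt hk
  have h := tendsto_signSum (by positivity) (by positivity) h_total hx hk
    (tendsto_natCast_sub_div_one hk_zero)
  rw [hσ]
  refine h.congr' ?_
  filter_upwards [eventually_le_of_tendsto_div_natCast_zero hk_zero] with n hkn
  rw [← sum_range_walkRetW_eq_signSum _ _ hkn]
  simp only [walkRetW_smul, ← Finset.mul_sum, inv_pow, div_eq_inv_mul]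

/-- **Limit law for returns to zero, zero drift**: `X_n/√n` converges in distribution
to the half-normal law `H(σ)` with `σ = √(P(1)/P″(1))`. -/
theorem returns_to_zero_half_normal (pm p0 p1 : ℝ)
    (hpm : 0 < pm) (hp0 : 0 < p0) (hp1 : 0 < p1) (hdrift : p1 = pm) :
    let P1 : ℝ := pm + p0 + p1
    let σ : ℝ := Real.sqrt (P1 / (2 * pm))
    ∀ x : ℝ, 0 ≤ x →
      Filter.Tendsto
        (fun n : ℕ =>
          (∑ k ∈ Finset.range (⌊x * Real.sqrt n⌋₊ + 1), walkRetW pm p0 p1 n k) / P1 ^ n)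
        Filter.atTop
        (nhds (∫ t in (0:ℝ)..x,
          Real.sqrt (2 / (Real.pi * σ ^ 2)) * Real.exp (-t ^ 2 / (2 * σ ^ 2)))) := by
  subst hdrift
  exact returns_to_zero_half_normal_general hpm hp0.le
end
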